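/- Let d > 2 and let C be a positive semidefinite matrix on ℂ²⊗ℂ^d with eigenvalues λ1 ≥ … ≥ λ_{2d}. Then the following are equivalent: (A) for every unitary U on ℂ²⊗ℂ^d there exists a diagonal matrix D whose diagonal entries are a permutation of the eigenvalues of C (with multiplicity) such that λ(tr_1[UCU*]) ⊕ λ(tr_2[UCU*]) ≺ λ(tr_1[D]) ⊕ λ(tr_2[D]); (B) at least one of the following holds: (1) rank(C) ≤ 3; (2) rank(C) ∈ {2d−1, 2d} and λ2 = λ3 = … = λ_{2d−1}; (3) rank(C) ∈ {2d−1, 2d}, λ3 = … = λ_{2d−1}, and λ2 ≥ 2(d−2)λ3 + λ_{2d}; (4) d = 3, rank(C) = 5, and λ3 = λ4 = λ5. Moreover, in cases (1), (2) and (4) the matrix D can be taken to be Λ, the diagonal matrix whose diagonal lists the eigenvalues in decreasing order, and in case (3) D can be taken to be either Λ or the matrix obtained from Λ by swapping the diagonal entries at positions 2 and d+1. -/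

import Mathlib

open Matrix Finset Kronecker
open scoped ComplexOrder

/-- The first partial trace of a matrix on `ℂ^{d1} ⊗ ℂ^{d2}` (index pairs `(i,s)` ordered
lexicographically): `(tr_1 C)_{s,t} = ∑_i C_{(i,s),(i,t)}`. -/
noncomputable def ptrace1 {d1 d2 : ℕ} (C : Matrix (Fin d1 × Fin d2) (Fin d1 × Fin d2) ℂ) :
    Matrix (Fin d2) (Fin d2) ℂ :=
  Matrix.of fun s t => ∑ i : Fin d1, C (i, s) (i, t)

/-- The second partial trace: `(tr_2 C)_{i,j} = ∑_s C_{(i,s),(j,s)}`. -/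
noncomputable def ptrace2 {d1 d2 : ℕ} (C : Matrix (Fin d1 × Fin d2) (Fin d1 × Fin d2) ℂ) :
    Matrix (Fin d1) (Fin d1) ℂ :=
  Matrix.of fun i j => ∑ s : Fin d2, C (i, s) (j, s)

/-- The sum of the `k` largest entries of the vector `x` (the largest value of a sum of `k`
entries of `x`), i.e. `∑_{i=1}^k x_i^↓`. -/
noncomputable def maxSum {ι : Type*} [Fintype ι] (x : ι → ℝ) (k : ℕ) : ℝ :=
  sSup {s : ℝ | ∃ A : Finset ι, A.card = k ∧ s = ∑ i ∈ A, x i}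

/-- `x ≺ y` (majorization): for every `k`, the sum of the `k` largest entries of `x` is at
most the sum of the `k` largest entries of `y`, and the total sums are equal. -/
def Majorizes {ι κ : Type*} [Fintype ι] [Fintype κ] (x : ι → ℝ) (y : κ → ℝ) : Prop :=
  (∀ k : ℕ, maxSum x k ≤ maxSum y k) ∧ ∑ i, x i = ∑ j, y j

/-- `x ≺_w y` (weak majorization). -/
def WeakMajorizes {ι κ : Type*} [Fintype ι] [Fintype κ] (x : ι → ℝ) (y : κ → ℝ) : Prop :=
  ∀ k : ℕ, maxSum x k ≤ maxSum y k

/-!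
Let `L` be the decreasing sequence of eigenvalues of `C`. Conjugation by local unitaries makes both
partial traces of `U C U*` diagonal without changing their spectra, so these are the column and row
sums of the diagonal of a matrix unitarily equivalent to `C`, and by Schur that diagonal is
majorized by `L`. Sufficiency thus becomes a statement about the marginals of a `2 × d` array
majorized by `L`: under (B) they are majorized by those of `L` written in lexicographic order, or,
in case (3) when no row sum exceeds `L 0 + L 1`, with its two largest terms in the first column.

For necessity, a unitary mixing two basis vectors that differ in both tensor factors creates no
off-diagonal entry seen by a partial trace, and moves the diagonal along the segment exchanging the
two corresponding entries. Start from an array whose first `m` columns hold the `2 m` largest terms.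
A small exchange between its first column and its last raises a row sum while keeping nearly the
largest possible total of both rows and `m` columns. No rearrangement does both unless the exchanged
terms coincide; this forces `L` to be constant from `L 2` to `L (2 d - 2)` once `L 3 ≠ 0`. The case
`m = 1` of the same exchange yields the inequality in (3).
-/

section MaxSum

variable {ι κ : Type*}

theorem finite_setOf_exists_card_eq_sum [Finite ι] (x : ι → ℝ) (k : ℕ) :
    {s : ℝ | ∃ A : Finset ι, #A = k ∧ s = ∑ i ∈ A, x i}.Finite :=
  (Set.finite_range fun A : Finset ι => ∑ i ∈ A, x i).subset fun _ ⟨A, _, hA⟩ => ⟨A, hA.symm⟩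

variable [Fintype ι] [Fintype κ]

theorem sum_le_maxSum (x : ι → ℝ) {A : Finset ι} {k : ℕ} (hA : #A = k) :
    ∑ i ∈ A, x i ≤ maxSum x k :=
  le_csSup (finite_setOf_exists_card_eq_sum x k).bddAbove ⟨A, hA, rfl⟩

theorem exists_maxSum_eq_sum (x : ι → ℝ) {k : ℕ} (hk : k ≤ Fintype.card ι) :
    ∃ A : Finset ι, #A = k ∧ maxSum x k = ∑ i ∈ A, x i := by
  obtain ⟨A, -, hA⟩ := exists_subset_card_eq (s := (univ : Finset ι)) hk
  exact (finite_setOf_exists_card_eq_sum x k).isCompact.sSup_mem ⟨_, A, hA, rfl⟩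

theorem maxSum_eq_zero_of_card_lt (x : ι → ℝ) {k : ℕ} (hk : Fintype.card ι < k) :
    maxSum x k = 0 := by
  have hempty : {s : ℝ | ∃ A : Finset ι, #A = k ∧ s = ∑ i ∈ A, x i} = ∅ :=
    Set.eq_empty_of_forall_notMem fun _ ⟨A, hA, _⟩ => hk.not_ge (hA ▸ card_le_univ A)
  rw [maxSum, hempty, Real.sSup_empty]

theorem maxSum_comp_equiv (e : ι ≃ κ) (x : κ → ℝ) (k : ℕ) : maxSum (x ∘ e) k = maxSum x k := by
  unfold maxSum
  congr 1
  ext s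
  constructor
  · rintro ⟨A, hA, rfl⟩
    exact ⟨A.map e.toEmbedding, by simpa using hA, by simp⟩
  · rintro ⟨A, hA, rfl⟩
    exact ⟨A.map e.symm.toEmbedding, by simpa using hA, by simp⟩

theorem majorizes_comp_equiv_iff {ι' κ' : Type*} [Fintype ι'] [Fintype κ'] (e : ι' ≃ ι)
    (f : κ' ≃ κ) (x : ι → ℝ) (y : κ → ℝ) : Majorizes (x ∘ e) (y ∘ f) ↔ Majorizes x y := by
  simp only [Majorizes, maxSum_comp_equiv, Function.comp_apply, Equiv.sum_comp e x,
    Equiv.sum_comp f y]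

theorem weakMajorizes_of_forall_sum_le {x y : ι → ℝ}
    (h : ∀ A : Finset ι, ∑ i ∈ A, x i ≤ maxSum y #A) : WeakMajorizes x y := by
  intro k
  by_cases hk : k ≤ Fintype.card ι
  · obtain ⟨A, rfl, hA⟩ := exists_maxSum_eq_sum x hk
    exact hA.trans_le (h A)
  · rw [maxSum_eq_zero_of_card_lt x (not_le.mp hk), maxSum_eq_zero_of_card_lt y (not_le.mp hk)]

end MaxSum

section Marginals

variable {ι κ : Type*}

/-- The sum of the column `s` of the array `δ`, indexed by rows `ι` and columns `κ`. For a diagonal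
matrix with diagonal `δ` this is the entry at `s` of the first partial trace. -/
def colSum [Fintype ι] (δ : ι × κ → ℝ) (s : κ) : ℝ :=
  ∑ i, δ (i, s)

/-- The sum of the row `i` of the array `δ`. For a diagonal matrix with diagonal `δ` this is the
entry at `i` of the second partial trace. -/
def rowSum [Fintype κ] (δ : ι × κ → ℝ) (i : ι) : ℝ :=
  ∑ s, δ (i, s)

/-- The column sums followed by the row sums of the array `δ`: the concatenated spectra of the two
partial traces of the diagonal matrix with diagonal `δ`. -/
def marginals [Fintype ι] [Fintype κ] (δ : ι × κ → ℝ) : κ ⊕ ι → ℝ :=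
  Sum.elim (colSum δ) (rowSum δ)

theorem sum_colSum_eq_sum_product [Fintype ι] (δ : ι × κ → ℝ) (S : Finset κ) :
    ∑ s ∈ S, colSum δ s = ∑ p ∈ univ ×ˢ S, δ p :=
  (sum_product_right _ _ _).symm

theorem sum_rowSum_eq_sum_product [Fintype κ] (δ : ι × κ → ℝ) (R : Finset ι) :
    ∑ i ∈ R, rowSum δ i = ∑ p ∈ R ×ˢ univ, δ p :=
  (sum_product _ _ _).symm

variable [Fintype ι] [Fintype κ]

theorem sum_marginals (δ : ι × κ → ℝ) (A : Finset (κ ⊕ ι)) :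
    ∑ a ∈ A, marginals δ a = ∑ i ∈ A.toRight, rowSum δ i + ∑ s ∈ A.toLeft, colSum δ s := by
  conv_lhs => rw [← toLeft_disjSum_toRight (u := A), sum_disjSum, add_comm]
  rfl

theorem sum_marginals_univ (δ : ι × κ → ℝ) : ∑ a, marginals δ a = 2 * ∑ p, δ p := by
  rw [sum_marginals, toRight_univ, toLeft_univ, sum_rowSum_eq_sum_product,
    sum_colSum_eq_sum_product, univ_product_univ, two_mul]

theorem sum_rowSum_add_sum_colSum_le_maxSum (δ : ι × κ → ℝ) (R : Finset ι) (S : Finset κ) {k : ℕ}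
    (hk : #S + #R = k) :
    ∑ i ∈ R, rowSum δ i + ∑ s ∈ S, colSum δ s ≤ maxSum (marginals δ) k := by
  have h := sum_le_maxSum (marginals δ) (A := S.disjSum R) (k := k) (by rwa [card_disjSum])
  rwa [sum_marginals, toRight_disjSum, toLeft_disjSum] at h

theorem rowSum_add_sum_colSum_le_maxSum (δ : ι × κ → ℝ) (i : ι) (S : Finset κ) {k : ℕ}
    (hk : #S + 1 = k) : rowSum δ i + ∑ s ∈ S, colSum δ s ≤ maxSum (marginals δ) k := by
  simpa using sum_rowSum_add_sum_colSum_le_maxSum δ {i} S (by simpa using hk)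

theorem sum_add_sum_colSum_le_maxSum (δ : Fin 2 × κ → ℝ) (S : Finset κ) {k : ℕ}
    (hk : #S + 2 = k) : ∑ p, δ p + ∑ s ∈ S, colSum δ s ≤ maxSum (marginals δ) k := by
  simpa [sum_rowSum_eq_sum_product] using
    sum_rowSum_add_sum_colSum_le_maxSum δ univ S (by simpa using hk)

/-- A set of entries of the marginals of a two-row array contains no row, one row or both rows. -/
theorem sum_marginals_cases (δ : Fin 2 × κ → ℝ) (A : Finset (κ ⊕ Fin 2)) :
    (∃ S : Finset κ, #A = #S ∧ ∑ a ∈ A, marginals δ a = ∑ s ∈ S, colSum δ s) ∨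
      (∃ (i : Fin 2) (S : Finset κ), #A = #S + 1 ∧
        ∑ a ∈ A, marginals δ a = rowSum δ i + ∑ s ∈ S, colSum δ s) ∨
      ∃ S : Finset κ, #A = #S + 2 ∧
        ∑ a ∈ A, marginals δ a = ∑ p, δ p + ∑ s ∈ S, colSum δ s := by
  rw [sum_marginals, ← card_toLeft_add_card_toRight (u := A)]
  have hcard : #A.toRight ≤ 2 := card_le_univ A.toRight
  obtain h | h | h : #A.toRight = 0 ∨ #A.toRight = 1 ∨ #A.toRight = 2 := by omega
  · exact .inl ⟨A.toLeft, by rw [h, add_zero], by simp [card_eq_zero.mp h]⟩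
  · obtain ⟨i, hi⟩ := card_eq_one.mp h
    exact .inr (.inl ⟨i, A.toLeft, by rw [h], by simp [hi]⟩)
  · have huniv : A.toRight = univ := (card_eq_iff_eq_univ _).mp h
    refine .inr (.inr ⟨A.toLeft, by rw [h], ?_⟩)
    rw [huniv, sum_rowSum_eq_sum_product, univ_product_univ]

end Marginals

section PrefixSum

/-- The sum `L 0 + ⋯ + L (n - 1)`. -/
def prefixSum (L : ℕ → ℝ) (n : ℕ) : ℝ :=
  ∑ i ∈ range n, L i

theorem prefixSum_zero (L : ℕ → ℝ) : prefixSum L 0 = 0 :=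
  sum_range_zero L

theorem prefixSum_succ (L : ℕ → ℝ) (n : ℕ) : prefixSum L (n + 1) = prefixSum L n + L n :=
  sum_range_succ L n

variable {L : ℕ → ℝ}

theorem prefixSum_mono (h0 : ∀ i, 0 ≤ L i) : Monotone (prefixSum L) :=
  monotone_nat_of_le_succ fun n => by rw [prefixSum_succ]; exact le_add_of_nonneg_right (h0 n)

theorem prefixSum_eq_add_mul {a n : ℕ} {c : ℝ} (han : a ≤ n) (hc : ∀ i, a ≤ i → i < n → L i = c) :
    prefixSum L n = prefixSum L a + (n - a) * c := by
  induction n, han using Nat.le_induction with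
  | base => simp
  | succ n han ih =>
    rw [prefixSum_succ, ih fun i hai hi => hc i hai (by omega), hc n han n.lt_succ_self]
    push_cast
    ring

theorem prefixSum_two_mul_of_const {d : ℕ} {c : ℝ} (hd : 2 ≤ d)
    (hc : ∀ i, 2 ≤ i → i < 2 * d - 1 → L i = c) :
    prefixSum L (2 * d) = prefixSum L 2 + (2 * d - 3) * c + L (2 * d - 1) := by
  have hlast := prefixSum_succ L (2 * d - 1)
  rw [show 2 * d - 1 + 1 = 2 * d by omega, prefixSum_eq_add_mul (by omega : 2 ≤ 2 * d - 1) hc,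
    Nat.cast_sub (by omega)] at hlast
  push_cast at hlast
  linarith

theorem sum_mul_le_prefixSum (hL : Antitone L) {n k : ℕ} (c : Fin n → ℝ) (h0 : ∀ j, 0 ≤ c j)
    (h1 : ∀ j, c j ≤ 1) (hk : ∑ j, c j = k) : ∑ j, c j * L j ≤ prefixSum L k := by
  have hkn : k ≤ n := by
    have hsum : ∑ j, c j ≤ ∑ _j : Fin n, (1 : ℝ) := sum_le_sum fun j _ => h1 j
    rw [hk] at hsum
    simpa using hsum
  have hterm (j : Fin n) : c j * (L j - L k) ≤ if (j : ℕ) < k then L j - L k else 0 := by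
    split_ifs with hj
    · exact mul_le_of_le_one_left (sub_nonneg.mpr (hL hj.le)) (h1 j)
    · exact mul_nonpos_of_nonneg_of_nonpos (h0 j) (sub_nonpos.mpr (hL (not_lt.mp hj)))
  have htop : (∑ j : Fin n, if (j : ℕ) < k then L j - L k else 0) = prefixSum L k - k * L k := by
    rw [Fin.sum_univ_eq_sum_range (fun j => if j < k then L j - L k else 0), ← sum_filter,
      show (range n).filter (· < k) = range k by ext; simp; omega, sum_sub_distrib]
    simp [prefixSum]
  have hsplit : ∑ j, c j * (L j - L k) = ∑ j, c j * L j - k * L k := by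
    simp only [mul_sub, sum_sub_distrib, ← sum_mul, hk]
  linarith [sum_le_sum fun j (_ : j ∈ univ) => hterm j]

end PrefixSum

/-- The finite vector `x` is majorized by the first entries of the sequence `L`, which is to be
thought of as decreasing: the first `k` terms of `L` then stand for its `k` largest. -/
structure MajorizedBySeq {α : Type*} [Fintype α] (x : α → ℝ) (L : ℕ → ℝ) : Prop where
  sum_le (A : Finset α) : ∑ i ∈ A, x i ≤ prefixSum L #A
  sum_eq : ∑ i, x i = prefixSum L (Fintype.card α)

namespace MajorizedBySeq

section Vector

variable {α : Type*} [Fintype α] {x : α → ℝ} {L : ℕ → ℝ}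

theorem nonneg (h : MajorizedBySeq x L) (h0 : ∀ i, 0 ≤ L i) (i : α) : 0 ≤ x i := by
  classical
  have hsum : ∑ j ∈ univ.erase i, x j ≤ ∑ j, x j :=
    (h.sum_le _).trans ((prefixSum_mono h0 (card_le_univ _)).trans h.sum_eq.ge)
  linarith [add_sum_erase univ x (mem_univ i)]

theorem mulVec [DecidableEq α] (hL : Antitone L) {M : Matrix α α ℝ} (hM : M ∈ doublyStochastic ℝ α)
    {n : ℕ} (e : α ≃ Fin n) : MajorizedBySeq (M *ᵥ fun a => L (e a)) L := by
  obtain ⟨hM0, hrow, hcol⟩ := mem_doublyStochastic_iff_sum.mp hM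
  refine ⟨fun A => ?_, ?_⟩
  · have hweights : ∑ j, ∑ a ∈ A, M a (e.symm j) = #A := by
      rw [sum_comm]
      simp [e.symm.sum_comp (M _), hrow]
    have hswap : ∑ a ∈ A, (M *ᵥ fun a => L (e a)) a =
        ∑ j, (∑ a ∈ A, M a (e.symm j)) * L j := by
      rw [← e.sum_comp]
      simp only [Matrix.mulVec, dotProduct, e.symm_apply_apply, sum_mul]
      exact sum_comm
    rw [hswap]
    refine sum_mul_le_prefixSum hL _ (fun j => sum_nonneg fun a _ => hM0 a _) (fun j => ?_) hweights
    exact (sum_le_univ_sum_of_nonneg fun a => hM0 a _).trans (hcol _).le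
  · rw [sum_mulVec_of_mem_doublyStochastic hM, e.sum_comp fun j => L j, Fintype.card_congr e,
      Fintype.card_fin, prefixSum, Fin.sum_univ_eq_sum_range]

theorem arrangement (hL : Antitone L) {n : ℕ} (e : α ≃ Fin n) :
    MajorizedBySeq (fun a => L (e a)) L := by
  classical
  simpa using mulVec hL (one_mem (doublyStochastic ℝ α)) e

end Vector

section Array

variable {d : ℕ} {δ : Fin 2 × Fin d → ℝ} {L : ℕ → ℝ}

theorem sum_eq_prefixSum_two_mul (h : MajorizedBySeq δ L) : ∑ p, δ p = prefixSum L (2 * d) := by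
  simpa using h.sum_eq

theorem sum_colSum_le (h : MajorizedBySeq δ L) (S : Finset (Fin d)) :
    ∑ s ∈ S, colSum δ s ≤ prefixSum L (2 * #S) := by
  simpa [sum_colSum_eq_sum_product] using h.sum_le (univ ×ˢ S)

theorem colSum_le (h : MajorizedBySeq δ L) (s : Fin d) : colSum δ s ≤ prefixSum L 2 := by
  simpa using h.sum_colSum_le {s}

theorem colSum_nonneg (h : MajorizedBySeq δ L) (h0 : ∀ i, 0 ≤ L i) (s : Fin d) :
    0 ≤ colSum δ s :=
  sum_nonneg fun _ _ => h.nonneg h0 _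

/-- The entries in the row `i` and the columns `S` are counted twice; they are bounded separately
from the union of the row and the columns. -/
theorem rowSum_add_sum_colSum_le (h : MajorizedBySeq δ L) (i : Fin 2) (S : Finset (Fin d)) :
    rowSum δ i + ∑ s ∈ S, colSum δ s ≤ prefixSum L #S + prefixSum L (d + #S) := by
  have hinter : ({i} ×ˢ univ ∩ univ ×ˢ S : Finset (Fin 2 × Fin d)) = {i} ×ˢ S := by
    rw [product_inter_product, inter_univ, univ_inter]
  have hcard : #({i} ×ˢ univ ∪ univ ×ˢ S : Finset (Fin 2 × Fin d)) = d + #S := by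
    have hunion := card_union_add_card_inter ({i} ×ˢ univ : Finset (Fin 2 × Fin d)) (univ ×ˢ S)
    simp only [hinter, card_product, card_singleton, card_univ, Fintype.card_fin] at hunion
    omega
  have hunion := h.sum_le ({i} ×ˢ univ ∪ univ ×ˢ S)
  have hint := h.sum_le ({i} ×ˢ S)
  have hsum := sum_union_inter (s₁ := {i} ×ˢ univ) (s₂ := univ ×ˢ S) (f := δ)
  rw [hinter, ← sum_rowSum_eq_sum_product, ← sum_colSum_eq_sum_product, sum_singleton] at hsum
  rw [hcard] at hunion
  rw [card_product, card_singleton, one_mul] at hint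
  linarith

theorem rowSum_add_apply_le (h : MajorizedBySeq δ L) {i : Fin 2} {p : Fin 2 × Fin d}
    (hp : p.1 ≠ i) : rowSum δ i + δ p ≤ prefixSum L (d + 1) := by
  have hmem : p ∉ ({i} ×ˢ univ : Finset (Fin 2 × Fin d)) :=
    fun hmem => hp (by simpa using (mem_product.mp hmem).1)
  have hrow := sum_rowSum_eq_sum_product δ {i}
  have hle := h.sum_le (insert p ({i} ×ˢ univ))
  rw [sum_insert hmem, card_insert_of_notMem hmem, ← hrow] at hle
  simpa [add_comm] using hle

end Array

end MajorizedBySeq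

section BlockArray

/-- The position, in the decreasing order of the eigenvalues, placed at an entry of the `m`-th block
arrangement of a two-row array with `d` columns: the `2 * m` leading positions fill the first `m`
columns, the next `d - m` ones the rest of the upper row, and the last ones the rest of the lower
row. Thus `m = 0` is the lexicographic order. -/
def blockIdx (d m : ℕ) (p : Fin 2 × Fin d) : ℕ :=
  ![if (p.2 : ℕ) < m then (p.2 : ℕ) else m + p.2, if (p.2 : ℕ) < m then m + p.2 else d + p.2] p.1

theorem blockIdx_lt {d m : ℕ} (hm : m ≤ d) (p : Fin 2 × Fin d) : blockIdx d m p < 2 * d := by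
  obtain ⟨i, s⟩ := p
  fin_cases i <;> simp [blockIdx] <;> split_ifs <;> omega

theorem blockIdx_injective (d m : ℕ) : Function.Injective (blockIdx d m) := by
  rintro ⟨i, s⟩ ⟨j, t⟩ h
  rw [Prod.mk.injEq, Fin.ext_iff (a := s)]
  fin_cases i <;> fin_cases j <;> simp [blockIdx] at h ⊢ <;> split_ifs at h <;> omega

/-- The `m`-th block arrangement as an enumeration of the entries of the array. -/
noncomputable def blockEquiv {d m : ℕ} (hm : m ≤ d) : Fin 2 × Fin d ≃ Fin (2 * d) :=
  Equiv.ofBijective (fun p => ⟨blockIdx d m p, blockIdx_lt hm p⟩) <|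
    (Fintype.bijective_iff_injective_and_card _).mpr
      ⟨fun _ _ h => blockIdx_injective d m (Fin.val_eq_of_eq h), by simp⟩

/-- The sequence `L` written into a two-row array following the `m`-th block arrangement. -/
def blockArray (L : ℕ → ℝ) (d m : ℕ) (p : Fin 2 × Fin d) : ℝ :=
  L (blockIdx d m p)

/-- The set of the first `p` of `d` columns. -/
def firstCols (d p : ℕ) : Finset (Fin d) :=
  univ.filter fun s => (s : ℕ) < p

theorem card_firstCols {d p : ℕ} (hp : p ≤ d) : #(firstCols d p) = p := by
  rw [firstCols, Fin.card_filter_val_lt, min_eq_right hp]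

theorem sum_firstCols {d p : ℕ} (hp : p ≤ d) (f : ℕ → ℝ) :
    ∑ s ∈ firstCols d p, f s = ∑ i ∈ range p, f i := by
  rw [firstCols, sum_filter, Fin.sum_univ_eq_sum_range (fun i => if i < p then f i else 0),
    ← sum_filter, show (range d).filter (· < p) = range p by ext; simp; omega]

variable {L : ℕ → ℝ} {d m p : ℕ}

theorem majorizedBySeq_blockArray (hL : Antitone L) (hm : m ≤ d) :
    MajorizedBySeq (blockArray L d m) L :=
  .arrangement hL (blockEquiv hm)

theorem rowSum_blockArray_zero (hm : m ≤ d) :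
    rowSum (blockArray L d m) 0 = prefixSum L m + prefixSum L (m + d) - prefixSum L (2 * m) := by
  change ∑ s : Fin d, L (if (s : ℕ) < m then (s : ℕ) else m + s) = _
  rw [Fin.sum_univ_eq_sum_range fun s => L (if s < m then s else m + s)]
  induction d, hm using Nat.le_induction with
  | base =>
    rw [← two_mul, add_sub_cancel_right]
    exact sum_congr rfl fun s hs => by rw [if_pos (mem_range.mp hs)]
  | succ d hmd ih =>
    rw [sum_range_succ, ih, if_neg (not_lt.mpr hmd), ← add_assoc, prefixSum_succ]
    ring

theorem colSum_blockArray (s : Fin d) : colSum (blockArray L d m) s =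
    if (s : ℕ) < m then L s + L (m + s) else L (m + s) + L (d + s) := by
  rw [colSum, Fin.sum_univ_two]
  by_cases hs : (s : ℕ) < m <;> simp [blockArray, blockIdx, hs]

theorem sum_colSum_blockArray (hmp : m ≤ p) (hpd : p ≤ d) :
    ∑ s ∈ firstCols d p, colSum (blockArray L d m) s =
      prefixSum L (m + p) + prefixSum L (d + p) - prefixSum L (d + m) := by
  simp only [colSum_blockArray]
  rw [sum_firstCols hpd fun s => if s < m then L s + L (m + s) else L (m + s) + L (d + s)]
  clear hpd
  induction p, hmp using Nat.le_induction with
  | base =>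
    rw [add_sub_cancel_right, prefixSum, sum_range_add, ← sum_add_distrib]
    exact sum_congr rfl fun s hs => by rw [if_pos (mem_range.mp hs)]
  | succ p hmp ih =>
    rw [sum_range_succ, ih, if_neg (not_lt.mpr hmp), ← add_assoc m, ← add_assoc d,
      prefixSum_succ, prefixSum_succ]
    ring

theorem le_maxSum_blockArray_of_row (hmp : m ≤ p) (hpd : p ≤ d) :
    prefixSum L m - prefixSum L (2 * m) + prefixSum L (m + p) + prefixSum L (d + p) ≤
      maxSum (marginals (blockArray L d m)) (p + 1) := by
  refine le_of_eq_of_le ?_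
    (rowSum_add_sum_colSum_le_maxSum _ 0 (firstCols d p) (by rw [card_firstCols hpd]))
  rw [rowSum_blockArray_zero (hmp.trans hpd), sum_colSum_blockArray hmp hpd, add_comm m d]
  ring

theorem le_maxSum_blockArray_of_total (hL : Antitone L) (hmp : m ≤ p) (hpd : p ≤ d) :
    prefixSum L (2 * d) + (prefixSum L (m + p) + prefixSum L (d + p) - prefixSum L (d + m)) ≤
      maxSum (marginals (blockArray L d m)) (p + 2) := by
  rw [← (majorizedBySeq_blockArray hL (hmp.trans hpd)).sum_eq_prefixSum_two_mul,
    ← sum_colSum_blockArray hmp hpd]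
  exact sum_add_sum_colSum_le_maxSum _ _ (by rw [card_firstCols hpd])

end BlockArray

section Sufficiency

variable {d : ℕ} {L : ℕ → ℝ} {δ ε : Fin 2 × Fin d → ℝ}

theorem le_maxSum_marginals_of_nonneg (hε : ∀ p, 0 ≤ ε p) {k : ℕ} (hk : 2 ≤ k) (hkd : k ≤ d + 2) :
    ∑ p, ε p ≤ maxSum (marginals ε) k := by
  have hle : k - 2 ≤ d := by omega
  have hmax := sum_add_sum_colSum_le_maxSum ε (firstCols d (k - 2)) (k := k)
    (by rw [card_firstCols hle]; omega)
  have hcols : 0 ≤ ∑ s ∈ firstCols d (k - 2), colSum ε s :=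
    sum_nonneg fun s _ => sum_nonneg fun i _ => hε (i, s)
  linarith

/-- Sets without a row never matter: all columns together only give the total. -/
theorem majorizes_marginals (h0 : ∀ i, 0 ≤ L i) (hδ : MajorizedBySeq δ L)
    (hε : MajorizedBySeq ε L) (hcol : prefixSum L 2 ≤ maxSum (marginals ε) 1)
    (hrow : ∀ i S, rowSum δ i + ∑ s ∈ S, colSum δ s ≤ maxSum (marginals ε) (#S + 1))
    (htotal : ∀ S : Finset (Fin d), S.Nonempty →
      prefixSum L (2 * d) + ∑ s ∈ S, colSum δ s ≤ maxSum (marginals ε) (#S + 2)) :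
    Majorizes (marginals δ) (marginals ε) := by
  have hδε : ∑ p, δ p = ∑ p, ε p := hδ.sum_eq.trans hε.sum_eq.symm
  have hlarge {k : ℕ} (hk : 2 ≤ k) (hkd : k ≤ d + 2) : ∑ p, δ p ≤ maxSum (marginals ε) k :=
    hδε.trans_le (le_maxSum_marginals_of_nonneg (hε.nonneg h0) hk hkd)
  refine ⟨weakMajorizes_of_forall_sum_le fun A => ?_, by simp only [sum_marginals_univ, hδε]⟩
  have hA : #A ≤ d + 2 := by simpa using card_le_univ A
  obtain ⟨S, hcard, hsum⟩ | ⟨i, S, hcard, hsum⟩ | ⟨S, hcard, hsum⟩ := sum_marginals_cases δ A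
  · rw [hsum, hcard]
    obtain h | h | h : #S = 0 ∨ #S = 1 ∨ 2 ≤ #S := by omega
    · simpa [card_eq_zero.mp h] using sum_le_maxSum (marginals ε) (card_empty (α := Fin d ⊕ Fin 2))
    · obtain ⟨s, rfl⟩ := card_eq_one.mp h
      simpa using (hδ.colSum_le s).trans hcol
    · calc ∑ s ∈ S, colSum δ s ≤ ∑ s, colSum δ s :=
            sum_le_univ_sum_of_nonneg (hδ.colSum_nonneg h0)
        _ = ∑ p, δ p := by rw [sum_colSum_eq_sum_product, univ_product_univ]
        _ ≤ maxSum (marginals ε) #S := hlarge h (hcard ▸ hA)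
  · rw [hsum, hcard]
    exact hrow i S
  · rw [hsum, hcard]
    rcases S.eq_empty_or_nonempty with rfl | hS
    · simpa using hlarge le_rfl (by omega)
    · rw [hδ.sum_eq_prefixSum_two_mul]
      exact htotal S hS

theorem majorizes_blockArray_zero (hd : 2 ≤ d) (h0 : ∀ i, 0 ≤ L i) (hL : Antitone L)
    (hδ : MajorizedBySeq δ L)
    (hcols : ∀ S : Finset (Fin d), 1 ≤ #S → #S < d →
      prefixSum L (2 * d) + ∑ s ∈ S, colSum δ s ≤ prefixSum L (#S + 1) + prefixSum L (d + #S + 1) ∨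
        ∑ s ∈ S, colSum δ s ≤ prefixSum L #S + prefixSum L (d + #S) - prefixSum L d) :
    Majorizes (marginals δ) (marginals (blockArray L d 0)) := by
  have hrow {p : ℕ} (hp : p ≤ d) :
      prefixSum L p + prefixSum L (d + p) ≤ maxSum (marginals (blockArray L d 0)) (p + 1) := by
    simpa [prefixSum_zero] using le_maxSum_blockArray_of_row (L := L) p.zero_le hp
  have htotal {p : ℕ} (hp : p ≤ d) :
      prefixSum L (2 * d) + (prefixSum L p + prefixSum L (d + p) - prefixSum L d) ≤
        maxSum (marginals (blockArray L d 0)) (p + 2) := by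
    simpa using le_maxSum_blockArray_of_total hL p.zero_le hp
  refine majorizes_marginals h0 hδ (majorizedBySeq_blockArray hL d.zero_le) ?_ (fun i S => ?_)
    fun S hS => ?_
  · exact (prefixSum_mono h0 hd).trans (by simpa [prefixSum_zero] using hrow d.zero_le)
  · exact (hδ.rowSum_add_sum_colSum_le i S).trans (hrow (card_finset_fin_le S))
  · obtain h | h := (card_finset_fin_le S).eq_or_lt
    · have hall := hδ.sum_colSum_le S
      have hmax := htotal h.le
      rw [h, ← two_mul] at hmax
      rw [h] at hall ⊢
      linarith
    · obtain hS' | hS' := hcols S hS.card_pos h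
      · exact hS'.trans (by rw [add_assoc d]; exact hrow h)
      · exact (by gcongr : _ ≤ _).trans (htotal h.le)

theorem majorizes_blockArray_zero_of_eq_zero (hd : 2 ≤ d) (h0 : ∀ i, 0 ≤ L i) (hL : Antitone L)
    (hδ : MajorizedBySeq δ L) (hz : ∀ i, 3 ≤ i → L i = 0) :
    Majorizes (marginals δ) (marginals (blockArray L d 0)) := by
  have hP {n : ℕ} (hn : 3 ≤ n) : prefixSum L n = prefixSum L 3 := by
    simpa using prefixSum_eq_add_mul hn fun i hi _ => hz i hi
  refine majorizes_blockArray_zero hd h0 hL hδ fun S h1 _ => .inl ?_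
  have hcol := hδ.sum_colSum_le S
  rw [hP (by omega : 3 ≤ 2 * d), hP (by omega : 3 ≤ d + #S + 1)]
  obtain hS | hS : #S = 1 ∨ 2 ≤ #S := by omega
  · rw [hS] at hcol ⊢
    linarith
  · rw [hP (by omega : 3 ≤ 2 * #S)] at hcol
    rw [hP (by omega : 3 ≤ #S + 1)]
    linarith

theorem majorizes_blockArray_zero_of_const {c : ℝ} (hd : 2 ≤ d) (h0 : ∀ i, 0 ≤ L i)
    (hL : Antitone L) (hδ : MajorizedBySeq δ L)
    (hc : ∀ i, 1 ≤ i → i < 2 * d - 1 → L i = c) :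
    Majorizes (marginals δ) (marginals (blockArray L d 0)) := by
  have hP {n : ℕ} (h1n : 1 ≤ n) (hn : n < 2 * d) := prefixSum_eq_add_mul h1n fun i hi hin =>
    hc i hi (by omega : i < 2 * d - 1)
  refine majorizes_blockArray_zero hd h0 hL hδ fun S h1 hSd => .inr ?_
  have hcol := hδ.sum_colSum_le S
  rw [hP (by omega : 1 ≤ 2 * #S) (by omega)] at hcol
  rw [hP h1 (by omega), hP (by omega : 1 ≤ d + #S) (by omega), hP (by omega : 1 ≤ d) (by omega)]
  push_cast at hcol ⊢
  linarith

theorem majorizes_blockArray_one_of_rowSum_le {c : ℝ} (hd : 2 ≤ d) (h0 : ∀ i, 0 ≤ L i)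
    (hL : Antitone L) (hδ : MajorizedBySeq δ L)
    (hc : ∀ i, 2 ≤ i → i < 2 * d - 1 → L i = c) (hrow : ∀ i, rowSum δ i ≤ prefixSum L 2) :
    Majorizes (marginals δ) (marginals (blockArray L d 1)) := by
  have hP {n : ℕ} (h2n : 2 ≤ n) (hn : n < 2 * d) := prefixSum_eq_add_mul h2n fun i hi hin =>
    hc i hi (by omega : i < 2 * d - 1)
  have hε := majorizedBySeq_blockArray hL (by omega : 1 ≤ d)
  have hfirst : prefixSum L 2 ≤ maxSum (marginals (blockArray L d 1)) 1 := by
    have hcol := sum_le_maxSum (marginals (blockArray L d 1))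
      (card_singleton (Sum.inl (⟨0, by omega⟩ : Fin d)))
    simpa [marginals, colSum_blockArray, prefixSum, sum_range_succ] using hcol
  have htotal {p : ℕ} (h1p : 1 ≤ p) (hpd : p ≤ d) : prefixSum L (2 * d) + prefixSum L (2 * p) ≤
      maxSum (marginals (blockArray L d 1)) (p + 2) := by
    have hmax := le_maxSum_blockArray_of_total hL h1p hpd
    obtain rfl | hlt := hpd.eq_or_lt
    · rw [← two_mul, add_comm 1 p] at hmax
      linarith
    · rw [hP (by omega : 2 ≤ 1 + p) (by omega), hP (by omega : 2 ≤ d + p) (by omega),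
        hP (by omega : 2 ≤ d + 1) (by omega)] at hmax
      rw [hP (by omega : 2 ≤ 2 * p) (by omega)]
      push_cast at hmax ⊢
      linarith
  refine majorizes_marginals h0 hδ hε hfirst (fun i S => ?_) fun S hS => ?_
  · have hSd := card_finset_fin_le S
    have hmono := prefixSum_mono h0
    have hle := hδ.rowSum_add_sum_colSum_le i S
    obtain hS | hS | hS : #S = 0 ∨ #S = 1 ∨ 2 ≤ #S := by omega
    · simpa [card_eq_zero.mp hS] using (hrow i).trans hfirst
    · have hmax := le_maxSum_blockArray_of_row (L := L) le_rfl (by omega : 1 ≤ d)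
      rw [hS] at hle ⊢
      norm_num at hmax ⊢
      linarith
    · have hmax := htotal (by omega : 1 ≤ #S - 1) (by omega)
      rw [show #S - 1 + 2 = #S + 1 by omega] at hmax
      linarith [hmono (by omega : d + #S ≤ 2 * d), hmono (by omega : #S ≤ 2 * (#S - 1))]
  · linarith [htotal hS.card_pos (card_finset_fin_le S), hδ.sum_colSum_le S]

theorem majorizes_blockArray_zero_of_lt_rowSum {c : ℝ} (hd : 2 ≤ d) (h0 : ∀ i, 0 ≤ L i)
    (hL : Antitone L) (hδ : MajorizedBySeq δ L)
    (hc : ∀ i, 2 ≤ i → i < 2 * d - 1 → L i = c) (h1 : 2 * ((d : ℝ) - 2) * c + L (2 * d - 1) ≤ L 1)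
    {i : Fin 2} (hi : prefixSum L 2 < rowSum δ i) :
    Majorizes (marginals δ) (marginals (blockArray L d 0)) := by
  have hP {n : ℕ} (h2n : 2 ≤ n) (hn : n < 2 * d) := prefixSum_eq_add_mul h2n fun i hi hin =>
    hc i hi (by omega : i < 2 * d - 1)
  have hP2 : prefixSum L 2 = prefixSum L 1 + L 1 := prefixSum_succ L 1
  refine majorizes_blockArray_zero hd h0 hL hδ fun S hS hSd => ?_
  obtain h | h : #S = 1 ∨ 2 ≤ #S := by omega
  · left
    obtain rfl | h2d := hd.eq_or_lt
    · simpa [h, add_comm (prefixSum L 4)] using hδ.sum_colSum_le S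
    · have hle := hδ.rowSum_add_sum_colSum_le i S
      rw [h, hP (by omega : 2 ≤ d + 1) (by omega)] at hle
      rw [h, prefixSum_two_mul_of_const hd hc, hP (by omega : 2 ≤ d + 1 + 1) (by omega)]
      push_cast at hle ⊢
      linarith
  · right
    have hcol := hδ.sum_colSum_le S
    rw [hP (by omega : 2 ≤ 2 * #S) (by omega)] at hcol
    rw [hP h (by omega), hP (by omega : 2 ≤ d + #S) (by omega), hP hd (by omega)]
    push_cast at hcol ⊢
    linarith

end Sufficiency

theorem majorizes_blockArray_zero_three {L : ℕ → ℝ} {δ : Fin 2 × Fin 3 → ℝ} (h0 : ∀ i, 0 ≤ L i)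
    (hL : Antitone L) (hδ : MajorizedBySeq δ L) (h23 : L 2 = L 3) (h34 : L 3 = L 4)
    (h5 : L 5 = 0) :
    Majorizes (marginals δ) (marginals (blockArray L 3 0)) := by
  refine majorizes_blockArray_zero (by norm_num) h0 hL hδ fun S h1 h3 => ?_
  have hcol := hδ.sum_colSum_le S
  obtain hS | hS : #S = 1 ∨ #S = 2 := by omega
  · left
    rw [hS] at hcol ⊢
    norm_num [prefixSum, sum_range_succ] at hcol ⊢
    linarith
  · right
    rw [hS] at hcol ⊢
    norm_num [prefixSum, sum_range_succ] at hcol ⊢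
    linarith

theorem majorizes_blockArray_zero_of_cases {d : ℕ} {L : ℕ → ℝ} {δ : Fin 2 × Fin d → ℝ} (hd : 2 ≤ d)
    (h0 : ∀ i, 0 ≤ L i) (hL : Antitone L) (hδ : MajorizedBySeq δ L)
    (h : L 3 = 0 ∨ (∀ i, 1 ≤ i → i < 2 * d - 1 → L i = L 1) ∨
      d = 3 ∧ L 5 = 0 ∧ L 2 = L 3 ∧ L 3 = L 4) :
    Majorizes (marginals δ) (marginals (blockArray L d 0)) := by
  obtain h3 | hc | ⟨rfl, h5, h23, h34⟩ := h
  · exact majorizes_blockArray_zero_of_eq_zero hd h0 hL hδ fun i hi =>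
      ((hL hi).trans_eq h3).antisymm (h0 i)
  · exact majorizes_blockArray_zero_of_const hd h0 hL hδ hc
  · exact majorizes_blockArray_zero_three h0 hL hδ h23 h34 h5

theorem majorizes_blockArray_zero_or_one {d : ℕ} {L : ℕ → ℝ} {δ : Fin 2 × Fin d → ℝ} {c : ℝ}
    (hd : 2 ≤ d) (h0 : ∀ i, 0 ≤ L i) (hL : Antitone L) (hδ : MajorizedBySeq δ L)
    (hc : ∀ i, 2 ≤ i → i < 2 * d - 1 → L i = c) (h1 : 2 * ((d : ℝ) - 2) * c + L (2 * d - 1) ≤ L 1) :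
    Majorizes (marginals δ) (marginals (blockArray L d 0)) ∨
      Majorizes (marginals δ) (marginals (blockArray L d 1)) := by
  by_cases! hrow : ∃ i, prefixSum L 2 < rowSum δ i
  · obtain ⟨i, hi⟩ := hrow
    exact .inl (majorizes_blockArray_zero_of_lt_rowSum hd h0 hL hδ hc h1 hi)
  · exact .inr (majorizes_blockArray_one_of_rowSum_le hd h0 hL hδ hc hrow)

section PartialSwap

variable {α : Type*} [DecidableEq α]

/-- The point at parameter `t` of the segment from the vector `δ` to the vector obtained from it by
exchanging the entries at `p` and `q`. -/
def partialSwap (p q : α) (t : ℝ) (δ : α → ℝ) (x : α) : ℝ :=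
  (1 - t) * δ x + t * δ (Equiv.swap p q x)

theorem partialSwap_comm (p q : α) (t : ℝ) (δ : α → ℝ) :
    partialSwap p q t δ = partialSwap q p t δ := by
  funext x
  rw [partialSwap, partialSwap, Equiv.swap_comm]

theorem sum_partialSwap [Fintype α] (p q : α) (t : ℝ) (δ : α → ℝ) :
    ∑ x, partialSwap p q t δ x = ∑ x, δ x := by
  simp only [partialSwap, sum_add_distrib, ← mul_sum, Equiv.sum_comp]
  ring

theorem sum_partialSwap_of_mem_of_notMem {p q : α} {A : Finset α} (hp : p ∈ A) (hq : q ∉ A)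
    (t : ℝ) (δ : α → ℝ) : ∑ x ∈ A, partialSwap p q t δ x = ∑ x ∈ A, δ x - t * (δ p - δ q) := by
  have hfix : ∑ x ∈ A.erase p, partialSwap p q t δ x = ∑ x ∈ A.erase p, δ x := by
    refine sum_congr rfl fun x hx => ?_
    rw [partialSwap, Equiv.swap_apply_of_ne_of_ne (ne_of_mem_erase hx)
      (ne_of_mem_of_not_mem (mem_of_mem_erase hx) hq)]
    ring
  rw [← add_sum_erase A _ hp, ← add_sum_erase A _ hp, hfix, partialSwap, Equiv.swap_apply_left]
  ring

end PartialSwap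

section BlockSwap

variable {d m : ℕ}

/-- Exchanging the first entry of the lower row with the last entry of the upper row increases the
upper row sum and decreases the sum of the first `m` columns. -/
theorem le_maxSum_partialSwap_blockArray {L : ℕ → ℝ} (hL : Antitone L) (h1m : 1 ≤ m) (hmd : m < d)
    (t : ℝ) :
    let δ := partialSwap (1, ⟨0, by omega⟩) (0, ⟨d - 1, by omega⟩) t (blockArray L d m)
    prefixSum L m + prefixSum L (m + d) - prefixSum L (2 * m) + t * (L m - L (m + d - 1)) ≤
        maxSum (marginals δ) 1 ∧
      prefixSum L (2 * d) + prefixSum L (2 * m) - t * (L m - L (m + d - 1)) ≤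
        maxSum (marginals δ) (m + 2) := by
  intro δ
  have hp : blockArray L d m (1, ⟨0, by omega⟩) = L m := by
    simp [blockArray, blockIdx, show 0 < m from h1m]
  have hq : blockArray L d m (0, ⟨d - 1, by omega⟩) = L (m + d - 1) := by
    simp [blockArray, blockIdx, show ¬ d - 1 < m by omega, show m + (d - 1) = m + d - 1 by omega]
  have hrow : rowSum δ 0 = prefixSum L m + prefixSum L (m + d) - prefixSum L (2 * m) +
      t * (L m - L (m + d - 1)) := by
    have hsum := sum_partialSwap_of_mem_of_notMem (A := {0} ×ˢ (univ : Finset (Fin d)))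
      (p := (0, ⟨d - 1, by omega⟩)) (q := (1, ⟨0, by omega⟩)) (by simp) (by simp) t
      (blockArray L d m)
    rw [partialSwap_comm, ← sum_rowSum_eq_sum_product, ← sum_rowSum_eq_sum_product, sum_singleton,
      sum_singleton, rowSum_blockArray_zero hmd.le, hp, hq] at hsum
    rw [hsum]
    ring
  have hcols : ∑ s ∈ firstCols d m, colSum δ s =
      prefixSum L (2 * m) - t * (L m - L (m + d - 1)) := by
    rw [sum_colSum_eq_sum_product, sum_partialSwap_of_mem_of_notMem (by simp [firstCols]; omega)
      (by simp [firstCols]; omega), ← sum_colSum_eq_sum_product,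
      sum_colSum_blockArray le_rfl hmd.le, hp, hq, add_sub_cancel_right, ← two_mul]
  have htotal : ∑ p, δ p = prefixSum L (2 * d) := by
    rw [sum_partialSwap, (majorizedBySeq_blockArray hL hmd.le).sum_eq_prefixSum_two_mul]
  constructor
  · rw [← hrow]
    simpa using rowSum_add_sum_colSum_le_maxSum δ 0 ∅ (k := 1) (by simp)
  · rw [add_sub_assoc, ← hcols, ← htotal]
    exact sum_add_sum_colSum_le_maxSum δ _ (by rw [card_firstCols hmd.le])

end BlockSwap

section MaxSumOfMarginals

variable {d : ℕ} {L : ℕ → ℝ} {δ : Fin 2 × Fin d → ℝ}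

theorem maxSum_marginals_one_cases (δ : Fin 2 × Fin d → ℝ) :
    (∃ s, maxSum (marginals δ) 1 = colSum δ s) ∨ ∃ i, maxSum (marginals δ) 1 = rowSum δ i := by
  obtain ⟨A, hA, hmax⟩ := exists_maxSum_eq_sum (marginals δ) (k := 1) (by simp)
  obtain ⟨s | i, rfl⟩ := card_eq_one.mp hA
  · exact .inl ⟨s, by simpa [marginals] using hmax⟩
  · exact .inr ⟨i, by simpa [marginals] using hmax⟩

/-- A large value at `m + 2` forces both rows and `m` columns carrying the `2 * m` leading terms, so
that each row gets at most half of those. -/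
theorem MajorizedBySeq.maxSum_marginals_one_le (h : MajorizedBySeq δ L) (h0 : ∀ i, 0 ≤ L i) {m : ℕ}
    (h2m : 2 ≤ m) (hmd : m < d) (hpos : 0 < L (m + 1))
    (hmax : prefixSum L (2 * d) + prefixSum L (2 * m) ≤ maxSum (marginals δ) (m + 2)) :
    maxSum (marginals δ) 1 ≤ prefixSum L m + prefixSum L (m + d) - prefixSum L (2 * m) := by
  have hmono := prefixSum_mono h0
  have hlt : prefixSum L (m + 1) < prefixSum L (2 * m) := by
    have hle := hmono (by omega : m + 1 + 1 ≤ 2 * m)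
    rw [prefixSum_succ] at hle
    linarith
  have hnn : 0 ≤ prefixSum L (m + 1) := prefixSum_zero L ▸ hmono (m + 1).zero_le
  obtain ⟨A, hA, hsum⟩ := exists_maxSum_eq_sum (marginals δ) (k := m + 2) (by simp; omega)
  rw [hsum] at hmax
  obtain ⟨S, -, hS⟩ | ⟨i, S, hcard, hS⟩ | ⟨S, hcard, hS⟩ := sum_marginals_cases δ A
  · have hcols := sum_le_univ_sum_of_nonneg (h.colSum_nonneg h0) (s := S)
    rw [sum_colSum_eq_sum_product δ univ, univ_product_univ, h.sum_eq_prefixSum_two_mul] at hcols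
    linarith
  · have hrow := h.rowSum_add_sum_colSum_le i S
    rw [show #S = m + 1 by omega] at hrow
    linarith [hmono (by omega : d + (m + 1) ≤ 2 * d)]
  · rw [hS, h.sum_eq_prefixSum_two_mul] at hmax
    obtain ⟨s, hs⟩ | ⟨i, hi⟩ := maxSum_marginals_one_cases δ
    · linarith [h.colSum_le s, hmono h2m, hmono (by omega : 2 * m ≤ m + d)]
    · have hrow := h.rowSum_add_sum_colSum_le i S
      rw [show #S = m by omega, add_comm d m] at hrow
      linarith

end MaxSumOfMarginals

section Necessity

/-- Every array `partialSwap p q t δ`, with `δ` an arrangement of the first terms of `L` and `p`,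
`q` sharing neither row nor column, has its marginals weakly majorized by those of some arrangement.
It is all that the necessity proof uses of condition (A). -/
def SwapPathsDominated (d : ℕ) (L : ℕ → ℝ) : Prop :=
  ∀ (e : Fin 2 × Fin d ≃ Fin (2 * d)) (p q : Fin 2 × Fin d), p.1 ≠ q.1 → p.2 ≠ q.2 →
    ∀ t ∈ Set.Icc (0 : ℝ) 1, ∃ e' : Fin 2 × Fin d ≃ Fin (2 * d),
      WeakMajorizes (marginals (partialSwap p q t fun x => L (e x))) (marginals fun x => L (e' x))

namespace SwapPathsDominated

variable {d m : ℕ} {L : ℕ → ℝ}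

theorem exists_maxSum_ge (H : SwapPathsDominated d L) (hL : Antitone L) (h1m : 1 ≤ m)
    (hmd : m < d) {t : ℝ} (ht : t ∈ Set.Icc (0 : ℝ) 1) :
    ∃ e : Fin 2 × Fin d ≃ Fin (2 * d),
      prefixSum L m + prefixSum L (m + d) - prefixSum L (2 * m) + t * (L m - L (m + d - 1)) ≤
          maxSum (marginals fun x => L (e x)) 1 ∧
        prefixSum L (2 * d) + prefixSum L (2 * m) - t * (L m - L (m + d - 1)) ≤
          maxSum (marginals fun x => L (e x)) (m + 2) := by
  obtain ⟨e, he⟩ := H (blockEquiv hmd.le) (1, ⟨0, by omega⟩) (0, ⟨d - 1, by omega⟩) (by simp)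
    (by simp; omega) t ht
  obtain ⟨hone, hmany⟩ := le_maxSum_partialSwap_blockArray hL h1m hmd t
  exact ⟨e, hone.trans (he 1), hmany.trans (he (m + 2))⟩

/-- As `t` tends to `0`, some arrangement dominates infinitely often; it has the largest possible
value at `m + 2`, hence cannot gain anything at `1`. -/
theorem apply_eq_apply_add (H : SwapPathsDominated d L) (h0 : ∀ i, 0 ≤ L i) (hL : Antitone L)
    (h2m : 2 ≤ m) (hmd : m < d) (hpos : 0 < L (m + 1)) : L m = L (m + d - 1) := by
  refine le_antisymm (not_lt.mp fun hlt => ?_) (hL (by omega))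
  have hex : ∃ᶠ t in nhdsWithin (0 : ℝ) (Set.Ioi 0), ∃ e : Fin 2 × Fin d ≃ Fin (2 * d),
      0 < t ∧ prefixSum L m + prefixSum L (m + d) - prefixSum L (2 * m) +
          t * (L m - L (m + d - 1)) ≤ maxSum (marginals fun x => L (e x)) 1 ∧
        prefixSum L (2 * d) + prefixSum L (2 * m) - t * (L m - L (m + d - 1)) ≤
          maxSum (marginals fun x => L (e x)) (m + 2) := by
    refine Filter.Eventually.frequently ?_
    filter_upwards [Ioc_mem_nhdsGT one_pos] with t ht
    obtain ⟨e, he⟩ := H.exists_maxSum_ge hL (by omega) hmd (Set.Ioc_subset_Icc_self ht)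
    exact ⟨e, ht.1, he⟩
  obtain ⟨e, he⟩ := Filter.frequently_exists.mp hex
  have hlim : Filter.Tendsto (fun t : ℝ => prefixSum L (2 * d) + prefixSum L (2 * m) -
      t * (L m - L (m + d - 1))) (nhdsWithin 0 (Set.Ioi 0))
      (nhds (prefixSum L (2 * d) + prefixSum L (2 * m))) := by
    refine (Continuous.tendsto' (by fun_prop) _ _ (by simp)).mono_left nhdsWithin_le_nhds
  have hmax := le_of_tendsto_of_frequently hlim (he.mono fun _ h => h.2.2)
  obtain ⟨t, ht, hone, -⟩ := he.exists
  have hone' := (MajorizedBySeq.arrangement hL e).maxSum_marginals_one_le h0 h2m hmd hpos hmax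
  linarith [mul_pos ht (sub_pos.mpr hlt)]

theorem const_of_pos (H : SwapPathsDominated d L) (h0 : ∀ i, 0 ≤ L i) (hL : Antitone L)
    (hd : 2 < d) (hpos : 0 < L 3) {i : ℕ} (h2i : 2 ≤ i) (hid : i < 2 * d - 1) : L i = L 2 := by
  have hleft : L 2 = L (2 + d - 1) := H.apply_eq_apply_add h0 hL le_rfl hd hpos
  have hmid : 0 < L (d - 1 + 1) := by
    linarith [hL (by omega : 2 ≤ 3), hL (by omega : d - 1 + 1 ≤ 2 + d - 1)]
  have hright : L (d - 1) = L (d - 1 + d - 1) :=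
    H.apply_eq_apply_add h0 hL (by omega) (by omega) hmid
  linarith [hL h2i, hL (by omega : i ≤ d - 1 + d - 1), hL (by omega : d - 1 ≤ 2 + d - 1)]

end SwapPathsDominated

section ConstFromTwo

variable {d : ℕ} {L : ℕ → ℝ} {c u : ℝ}

theorem colSum_le_of_lt_rowSum (hL : Antitone L) (hd : 2 < d)
    (hc : ∀ i, 2 ≤ i → i < 2 * d - 1 → L i = c) (e : Fin 2 × Fin d ≃ Fin (2 * d)) {i : Fin 2}
    (hi : L 0 + (d - 1) * c < rowSum (fun x => L (e x)) i) (s : Fin d) :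
    colSum (fun x => L (e x)) s ≤ L 0 + c := by
  have hother {p : Fin 2 × Fin d} (hp : p.1 ≠ i) : L (e p) ≤ c := by
    have hle := (MajorizedBySeq.arrangement hL e).rowSum_add_apply_le hp
    rw [prefixSum_eq_add_mul (by omega : 2 ≤ d + 1) fun j hj hjd => hc j hj (by omega)] at hle
    have hlt : L (e p) < L 1 := by
      norm_num [prefixSum, sum_range_succ] at hle
      linarith
    have h2 : 2 ≤ (e p : ℕ) := not_lt.mp fun h => hlt.not_ge (hL (by omega))
    exact (hL h2).trans (hc 2 le_rfl (by omega)).le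
  have hfirst (j : ℕ) : L j ≤ L 0 := hL j.zero_le
  rw [colSum, Fin.sum_univ_two]
  fin_cases i
  · linarith [hfirst (e (0, s)), hother (p := (1, s)) (by simp)]
  · linarith [hfirst (e (1, s)), hother (p := (0, s)) (by simp)]

theorem maxSum_marginals_three_lt (h0 : ∀ i, 0 ≤ L i) (hL : Antitone L) (hd : 2 < d)
    (hc : ∀ i, 2 ≤ i → i < 2 * d - 1 → L i = c) (hu0 : 0 < u) (hu1 : u < L 1 - c)
    (hu2 : u < (d - 3) * c + L (2 * d - 1)) (e : Fin 2 × Fin d ≃ Fin (2 * d)) {i : Fin 2}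
    (hi : L 0 + (d - 1) * c + u ≤ rowSum (fun x => L (e x)) i) :
    maxSum (marginals fun x => L (e x)) 3 < prefixSum L (2 * d) + prefixSum L 2 - u := by
  have he := MajorizedBySeq.arrangement hL e
  have hP2 : prefixSum L 2 = L 0 + L 1 := by simp [prefixSum, sum_range_succ]
  have hc0 : 0 ≤ c := hc 2 le_rfl (by omega) ▸ h0 2
  obtain ⟨A, hA, hmax⟩ := exists_maxSum_eq_sum (marginals fun x => L (e x)) (k := 3)
    (by simp; omega)
  rw [hmax]
  obtain ⟨S, -, hS⟩ | ⟨j, S, hcard, hS⟩ | ⟨S, hcard, hS⟩ := sum_marginals_cases _ A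
  · have hcols := sum_le_univ_sum_of_nonneg (he.colSum_nonneg h0) (s := S)
    rw [sum_colSum_eq_sum_product _ univ, univ_product_univ, he.sum_eq_prefixSum_two_mul] at hcols
    linarith [h0 0]
  · have hrow := he.rowSum_add_sum_colSum_le j S
    rw [show #S = 2 by omega,
      prefixSum_eq_add_mul (by omega : 2 ≤ d + 2) fun k hk hkd => hc k hk (by omega)] at hrow
    rw [hS, prefixSum_two_mul_of_const hd.le hc]
    push_cast at hrow
    linarith
  · obtain ⟨s, rfl⟩ := card_eq_one.mp (by omega : #S = 1)
    rw [hS, he.sum_eq_prefixSum_two_mul, sum_singleton]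
    linarith [colSum_le_of_lt_rowSum hL hd hc e (by linarith) s]

/-- In the first block arrangement, exchange opposite entries just enough to raise the upper row sum
by `u`: for `u` in a suitable interval the arrangement dominating the result has a row that large,
which leaves too little for its columns. -/
theorem SwapPathsDominated.two_mul_le_of_lt (H : SwapPathsDominated d L) (h0 : ∀ i, 0 ≤ L i)
    (hL : Antitone L) (hd : 2 < d) (hc : ∀ i, 2 ≤ i → i < 2 * d - 1 → L i = c) (hc0 : 0 < c)
    (hc1 : c < L 1) (hlast : 0 < (d - 3) * c + L (2 * d - 1)) :
    2 * ((d : ℝ) - 2) * c + L (2 * d - 1) ≤ L 1 := by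
  by_contra! hlt
  have hd' : (3 : ℝ) ≤ d := by exact_mod_cast hd
  have hdc : 0 < ((d : ℝ) - 2) * c := mul_pos (by linarith) hc0
  obtain ⟨u, hu, hu'⟩ : ∃ u, max 0 (L 1 - (d - 1) * c) < u ∧
      u < min (L 1 - c) ((d - 3) * c + L (2 * d - 1)) :=
    exists_between (max_lt (lt_min (by linarith) hlast) (lt_min (by linarith) (by linarith)))
  obtain ⟨hu0, hurow⟩ := max_lt_iff.mp hu
  obtain ⟨hu1, hu2⟩ := lt_min_iff.mp hu'
  have hgap : 0 < L 1 - c := sub_pos.mpr hc1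
  obtain ⟨e, hone, hthree⟩ := H.exists_maxSum_ge hL le_rfl (by omega) (t := u / (L 1 - c))
    ⟨div_nonneg hu0.le hgap.le, (div_le_one hgap).mpr hu1.le⟩
  rw [hc (1 + d - 1) (by omega) (by omega), div_mul_cancel₀ _ hgap.ne'] at hone hthree
  rw [prefixSum_eq_add_mul (by omega : 2 ≤ 1 + d) fun k hk hkd => hc k hk (by omega)] at hone
  norm_num [prefixSum_succ, prefixSum_zero] at hone
  obtain ⟨s, hs⟩ | ⟨i, hi⟩ := maxSum_marginals_one_cases fun x => L (e x)
  · have hcol := (MajorizedBySeq.arrangement hL e).colSum_le s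
    norm_num [prefixSum, sum_range_succ] at hcol
    linarith
  · exact hthree.not_gt
      (maxSum_marginals_three_lt h0 hL hd hc hu0 hu1 hu2 e (i := i) (by linarith))

end ConstFromTwo

theorem SwapPathsDominated.cases {d : ℕ} {L : ℕ → ℝ} (H : SwapPathsDominated d L)
    (h0 : ∀ i, 0 ≤ L i) (hL : Antitone L) (hd : 2 < d) :
    L 3 = 0 ∨ (0 < L (2 * d - 2) ∧ ∀ i, 1 ≤ i → i < 2 * d - 1 → L i = L 1) ∨
      (0 < L (2 * d - 2) ∧ (∀ i, 2 ≤ i → i < 2 * d - 1 → L i = L 2) ∧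
        2 * ((d : ℝ) - 2) * L 2 + L (2 * d - 1) ≤ L 1) ∨
      d = 3 ∧ (0 < L 4 ∧ L 5 = 0) ∧ L 2 = L 3 ∧ L 3 = L 4 := by
  rcases (h0 3).eq_or_lt with h3 | h3
  · exact .inl h3.symm
  have hc : ∀ i, 2 ≤ i → i < 2 * d - 1 → L i = L 2 := fun i => H.const_of_pos h0 hL hd h3
  have hc0 : 0 < L 2 := h3.trans_le (hL (by norm_num))
  have hpos : 0 < L (2 * d - 2) := by rwa [hc _ (by omega) (by omega)]
  refine .inr ?_
  rcases (hL (by norm_num : 1 ≤ 2)).eq_or_lt with h12 | h12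
  · refine .inl ⟨hpos, fun i h1i hid => ?_⟩
    obtain rfl | h2i := h1i.eq_or_lt
    exacts [rfl, (hc i h2i hid).trans h12]
  refine .inr ?_
  by_cases hlast : 0 < ((d : ℝ) - 3) * L 2 + L (2 * d - 1)
  · exact .inl ⟨hpos, hc, H.two_mul_le_of_lt h0 hL hd hc hc0 h12 hlast⟩
  · obtain rfl : d = 3 := by
      by_contra hd3
      have hd4 : (4 : ℝ) ≤ d := by exact_mod_cast (by omega : 4 ≤ d)
      exact hlast (by nlinarith [h0 (2 * d - 1)])
    refine .inr ⟨rfl, ⟨hpos, ?_⟩, (hc 3 (by omega) (by omega)).symm, ?_⟩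
    · norm_num at hlast
      exact hlast.antisymm (h0 5)
    · rw [hc 3 (by omega) (by omega), hc 4 (by omega) (by omega)]

end Necessity

section PartialTrace

variable {d1 d2 : ℕ}

theorem isHermitian_ptrace1 {X : Matrix (Fin d1 × Fin d2) (Fin d1 × Fin d2) ℂ}
    (hX : X.IsHermitian) : (ptrace1 X).IsHermitian := by
  ext s t
  simp [ptrace1, hX.apply]

theorem isHermitian_ptrace2 {X : Matrix (Fin d1 × Fin d2) (Fin d1 × Fin d2) ℂ}
    (hX : X.IsHermitian) : (ptrace2 X).IsHermitian := by
  ext i j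
  simp [ptrace2, hX.apply]

theorem trace_mul_ptrace1 (X : Matrix (Fin d1 × Fin d2) (Fin d1 × Fin d2) ℂ)
    (B : Matrix (Fin d2) (Fin d2) ℂ) : (B * ptrace1 X).trace = ((1 ⊗ₖ B) * X).trace := by
  simp only [trace, diag_apply, mul_apply, ptrace1, of_apply, Fintype.sum_prod_type,
    kroneckerMap_apply, one_apply, ite_mul, one_mul, zero_mul, mul_sum, sum_ite_irrel,
    sum_const_zero, sum_ite_eq, mem_univ, if_true]
  exact sum_comm_cycle

theorem trace_mul_ptrace2 (X : Matrix (Fin d1 × Fin d2) (Fin d1 × Fin d2) ℂ)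
    (B : Matrix (Fin d1) (Fin d1) ℂ) : (B * ptrace2 X).trace = ((B ⊗ₖ 1) * X).trace := by
  simp only [trace, diag_apply, mul_apply, ptrace2, of_apply, Fintype.sum_prod_type,
    kroneckerMap_apply, one_apply, mul_ite, ite_mul, mul_one, mul_zero, zero_mul, mul_sum,
    sum_ite_eq, mem_univ, if_true]
  exact sum_congr rfl fun _ _ => sum_comm

theorem ptrace1_kronecker_conj (X : Matrix (Fin d1 × Fin d2) (Fin d1 × Fin d2) ℂ)
    {V : Matrix (Fin d1) (Fin d1) ℂ} (hV : Vᴴ * V = 1) (W : Matrix (Fin d2) (Fin d2) ℂ) :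
    ptrace1 ((V ⊗ₖ W) * X * (V ⊗ₖ W)ᴴ) = W * ptrace1 X * Wᴴ := by
  refine Matrix.ext_iff_trace_mul_left.mpr fun B => ?_
  calc (B * ptrace1 ((V ⊗ₖ W) * X * (V ⊗ₖ W)ᴴ)).trace
      = ((V ⊗ₖ W)ᴴ * (1 ⊗ₖ B) * (V ⊗ₖ W) * X).trace := by
        rw [trace_mul_ptrace1, ← Matrix.mul_assoc, trace_mul_comm]
        simp only [Matrix.mul_assoc]
    _ = ((1 ⊗ₖ (Wᴴ * B * W)) * X).trace := by
        rw [conjTranspose_kronecker, ← mul_kronecker_mul, ← mul_kronecker_mul, Matrix.mul_one, hV]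
    _ = (B * (W * ptrace1 X * Wᴴ)).trace := by
        rw [← trace_mul_ptrace1, ← Matrix.mul_assoc, trace_mul_comm (B * _)]
        simp only [Matrix.mul_assoc]

theorem ptrace2_kronecker_conj (X : Matrix (Fin d1 × Fin d2) (Fin d1 × Fin d2) ℂ)
    (V : Matrix (Fin d1) (Fin d1) ℂ) {W : Matrix (Fin d2) (Fin d2) ℂ} (hW : Wᴴ * W = 1) :
    ptrace2 ((V ⊗ₖ W) * X * (V ⊗ₖ W)ᴴ) = V * ptrace2 X * Vᴴ := by
  refine Matrix.ext_iff_trace_mul_left.mpr fun B => ?_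
  calc (B * ptrace2 ((V ⊗ₖ W) * X * (V ⊗ₖ W)ᴴ)).trace
      = ((V ⊗ₖ W)ᴴ * (B ⊗ₖ 1) * (V ⊗ₖ W) * X).trace := by
        rw [trace_mul_ptrace2, ← Matrix.mul_assoc, trace_mul_comm]
        simp only [Matrix.mul_assoc]
    _ = (((Vᴴ * B * V) ⊗ₖ 1) * X).trace := by
        rw [conjTranspose_kronecker, ← mul_kronecker_mul, ← mul_kronecker_mul, Matrix.mul_one, hW]
    _ = (B * (V * ptrace2 X * Vᴴ)).trace := by
        rw [← trace_mul_ptrace2, ← Matrix.mul_assoc, trace_mul_comm (B * _)]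
        simp only [Matrix.mul_assoc]

end PartialTrace

section LocallyDiagonal

theorem exists_perm_eq_comp_of_map_eq {n β : Type*} [Fintype n] {f g : n → β}
    (h : (univ : Finset n).val.map f = (univ : Finset n).val.map g) :
    ∃ σ : Equiv.Perm n, f = g ∘ σ := by
  classical
  have hfiber (b : β) : Nonempty ({x // f x = b} ≃ {x // g x = b}) := by
    refine Fintype.card_eq.mp ?_
    simpa [Multiset.count_map, Fintype.card_subtype, card_def, eq_comm] using
      congrArg (Multiset.count b) h
  exact ⟨Equiv.ofFiberEquiv fun b => (hfiber b).some,
    funext fun x => (Equiv.ofFiberEquiv_map _ x).symm⟩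

theorem exists_perm_eigenvalues_eq {𝕜 n : Type*} [RCLike 𝕜] [Fintype n] [DecidableEq n]
    {M : Matrix n n 𝕜} (hM : M.IsHermitian) {v : n → ℝ}
    (h : M = diagonal fun i => (v i : 𝕜)) : ∃ σ : Equiv.Perm n, hM.eigenvalues = v ∘ σ := by
  have hroots : M.charpoly.roots = (univ : Finset n).val.map fun i => (v i : 𝕜) := by
    rw [h, charpoly_diagonal, Polynomial.roots_prod _ _
      (prod_ne_zero_iff.mpr fun i _ => Polynomial.X_sub_C_ne_zero _)]
    simp
  rw [hM.roots_charpoly_eq_eigenvalues] at hroots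
  refine exists_perm_eq_comp_of_map_eq ?_
  simpa [Multiset.map_map, Function.comp_def] using congrArg (Multiset.map RCLike.re) hroots

variable {d1 d2 : ℕ}

/-- The matrix `X` has diagonal `δ`, and its entries between distinct indices sharing a coordinate
vanish. These are the only entries the partial traces involve. -/
structure IsLocallyDiagonal (X : Matrix (Fin d1 × Fin d2) (Fin d1 × Fin d2) ℂ)
    (δ : Fin d1 × Fin d2 → ℝ) : Prop where
  apply_self (p : Fin d1 × Fin d2) : X p p = δ p
  apply_of_fst_eq (i : Fin d1) {s t : Fin d2} (h : s ≠ t) : X (i, s) (i, t) = 0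
  apply_of_snd_eq {i j : Fin d1} (h : i ≠ j) (s : Fin d2) : X (i, s) (j, s) = 0

namespace IsLocallyDiagonal

variable {X : Matrix (Fin d1 × Fin d2) (Fin d1 × Fin d2) ℂ} {δ : Fin d1 × Fin d2 → ℝ}

theorem of_isDiag (hX : X.IsDiag) (hδ : ∀ p, X p p = δ p) : IsLocallyDiagonal X δ where
  apply_self := hδ
  apply_of_fst_eq _ _ _ h := hX (by simpa using h)
  apply_of_snd_eq h _ := hX (by simpa using h)

theorem ptrace1_eq (h : IsLocallyDiagonal X δ) :
    ptrace1 X = diagonal fun s => (colSum δ s : ℂ) := by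
  ext s t
  obtain rfl | hst := eq_or_ne s t
  · simp [ptrace1, colSum, h.apply_self]
  · simp [ptrace1, h.apply_of_fst_eq _ hst, hst]

theorem ptrace2_eq (h : IsLocallyDiagonal X δ) :
    ptrace2 X = diagonal fun i => (rowSum δ i : ℂ) := by
  ext i j
  obtain rfl | hij := eq_or_ne i j
  · simp [ptrace2, rowSum, h.apply_self]
  · simp [ptrace2, h.apply_of_snd_eq hij, hij]

theorem exists_eigenvalues_eq_marginals_comp (h : IsLocallyDiagonal X δ)
    (h1 : (ptrace1 X).IsHermitian) (h2 : (ptrace2 X).IsHermitian) :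
    ∃ e : Equiv.Perm (Fin d2 ⊕ Fin d1),
      Sum.elim h1.eigenvalues h2.eigenvalues = marginals δ ∘ e := by
  obtain ⟨σ, hσ⟩ := exists_perm_eigenvalues_eq h1 h.ptrace1_eq
  obtain ⟨τ, hτ⟩ := exists_perm_eigenvalues_eq h2 h.ptrace2_eq
  refine ⟨Equiv.sumCongr σ τ, ?_⟩
  rw [hσ, hτ]
  ext (s | i) <;> rfl

end IsLocallyDiagonal

end LocallyDiagonal

section Unitary

variable {n : Type*} [Fintype n] [DecidableEq n]

theorem permMatrix_mem_unitaryGroup (σ : Equiv.Perm n) : σ.permMatrix ℂ ∈ unitaryGroup n ℂ := by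
  rw [mem_unitaryGroup_iff, star_eq_conjTranspose, conjTranspose_permMatrix, ← permMatrix_mul,
    inv_mul_cancel, permMatrix_one]

theorem permMatrix_conj_diagonal (σ : Equiv.Perm n) (w : n → ℂ) :
    σ.permMatrix ℂ * diagonal w * (σ.permMatrix ℂ)ᴴ = diagonal (w ∘ σ) := by
  rw [conjTranspose_permMatrix, Equiv.Perm.permMatrix, PEquiv.toMatrix_toPEquiv_mul,
    Equiv.Perm.permMatrix, PEquiv.mul_toMatrix_toPEquiv, submatrix_submatrix]
  exact submatrix_diagonal_equiv w σ

theorem exists_unitary_conj_eq_diagonal {M : Matrix n n ℂ} (hM : M.IsHermitian)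
    (σ : Equiv.Perm n) : ∃ V ∈ unitaryGroup n ℂ,
      V * M * Vᴴ = diagonal fun i => (hM.eigenvalues (σ i) : ℂ) := by
  obtain ⟨V, hV, hdiag⟩ : ∃ V ∈ unitaryGroup n ℂ,
      V * M * Vᴴ = diagonal fun i => (hM.eigenvalues i : ℂ) :=
    ⟨(star hM.eigenvectorUnitary : unitaryGroup n ℂ), (star hM.eigenvectorUnitary).2,
      hM.conjStarAlgAut_star_eigenvectorUnitary⟩
  refine ⟨σ.permMatrix ℂ * V, mul_mem (permMatrix_mem_unitaryGroup σ) hV, ?_⟩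
  calc σ.permMatrix ℂ * V * M * (σ.permMatrix ℂ * V)ᴴ
      = σ.permMatrix ℂ * (V * M * Vᴴ) * (σ.permMatrix ℂ)ᴴ := by
        simp only [conjTranspose_mul, Matrix.mul_assoc]
    _ = diagonal fun i => (hM.eigenvalues (σ i) : ℂ) := by
        rw [hdiag, permMatrix_conj_diagonal]
        rfl

theorem normSq_mem_doublyStochastic {W : Matrix n n ℂ} (hW : W ∈ unitaryGroup n ℂ) :
    Matrix.of (fun i j => ‖W i j‖ ^ 2) ∈ doublyStochastic ℝ n := by
  refine mem_doublyStochastic_iff_sum.mpr ⟨fun i j => sq_nonneg _, fun i => ?_, fun j => ?_⟩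
  · have hrow := congrFun₂ (mem_unitaryGroup_iff.mp hW) i i
    simp only [mul_apply, star_apply, RCLike.star_def, Complex.mul_conj', one_apply_eq] at hrow
    exact_mod_cast hrow
  · have hcol := congrFun₂ (mem_unitaryGroup_iff'.mp hW) j j
    simp only [mul_apply, star_apply, RCLike.star_def, Complex.conj_mul', one_apply_eq] at hcol
    exact_mod_cast hcol

theorem conj_diagonal_apply_self (W : Matrix n n ℂ) (v : n → ℝ) (i : n) :
    (W * diagonal (fun j => (v j : ℂ)) * Wᴴ) i i =
      ((Matrix.of (fun i j => ‖W i j‖ ^ 2) *ᵥ v) i : ℝ) := by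
  rw [mul_apply]
  simp only [mul_diagonal, conjTranspose_apply, RCLike.star_def, mulVec, dotProduct,
    of_apply, Complex.ofReal_sum, Complex.ofReal_mul, Complex.ofReal_pow, ← Complex.mul_conj']
  exact sum_congr rfl fun j _ => by ring

end Unitary

section SwapRotation

variable {α : Type*} [DecidableEq α]

/-- The unitary `√(1 - t) + i √t S`, where `S` exchanges the basis vectors at `p` and `q`. Its
conjugation action on a diagonal matrix moves the diagonal along `partialSwap`. -/
noncomputable def swapRotation (p q : α) (t : ℝ) : Matrix α α ℂ :=
  (√(1 - t) : ℂ) • 1 + (Complex.I * √t) • (Equiv.swap p q).permMatrix ℂ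

variable [Fintype α]

theorem swapRotation_conj_diagonal (p q : α) {t : ℝ} (ht : t ∈ Set.Icc 0 1) (w : α → ℝ) :
    let S := (Equiv.swap p q).permMatrix ℂ
    let D := diagonal fun x => (w x : ℂ)
    swapRotation p q t * D * (swapRotation p q t)ᴴ =
      diagonal (fun x => (partialSwap p q t w x : ℂ)) +
        (Complex.I * √t * √(1 - t)) • (S * D - D * S) := by
  intro S D
  have hS : Sᴴ = S := by rw [conjTranspose_permMatrix, Equiv.swap_inv]
  have hSDS : S * D * S = diagonal fun x => (w (Equiv.swap p q x) : ℂ) := by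
    nth_rw 2 [← hS]
    exact permMatrix_conj_diagonal _ _
  have hpath : diagonal (fun x => (partialSwap p q t w x : ℂ)) =
      (1 - t : ℂ) • D + (t : ℂ) • (S * D * S) := by
    simp [hSDS, D, ← diagonal_smul, partialSwap, Pi.smul_def]
  have hR : (swapRotation p q t)ᴴ = (√(1 - t) : ℂ) • 1 - (Complex.I * √t) • S := by
    simp [swapRotation, hS, S, sub_eq_add_neg, -conjTranspose_permMatrix]
  have ha : (√(1 - t) : ℂ) * √(1 - t) = 1 - t := by
    exact_mod_cast Real.mul_self_sqrt (sub_nonneg.mpr ht.2)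
  have hb : (√t : ℂ) * √t = t := by exact_mod_cast Real.mul_self_sqrt ht.1
  rw [hpath, hR, swapRotation]
  simp only [Matrix.add_mul, Matrix.mul_sub, Matrix.smul_mul, Matrix.mul_smul, Matrix.one_mul,
    Matrix.mul_one]
  linear_combination (norm := module) ha • D + (hb - √t * √t * Complex.I_mul_I) • (S * D * S)

theorem swapRotation_mem_unitaryGroup (p q : α) {t : ℝ} (ht : t ∈ Set.Icc 0 1) :
    swapRotation p q t ∈ unitaryGroup α ℂ := by
  have hone : partialSwap p q t 1 = 1 := by
    ext x
    simp [partialSwap]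
  simpa [hone, mem_unitaryGroup_iff, star_eq_conjTranspose] using
    swapRotation_conj_diagonal p q ht 1

theorem swapRotation_conj_diagonal_apply_self (p q : α) {t : ℝ} (ht : t ∈ Set.Icc 0 1)
    (w : α → ℝ) (x : α) :
    (swapRotation p q t * diagonal (fun x => (w x : ℂ)) * (swapRotation p q t)ᴴ) x x =
      partialSwap p q t w x := by
  simp [swapRotation_conj_diagonal p q ht, mul_comm]

theorem swapRotation_conj_diagonal_apply_of_ne {p q x y : α} {t : ℝ} (ht : t ∈ Set.Icc 0 1)
    (w : α → ℝ) (hxy : x ≠ y) (hswap : Equiv.swap p q x ≠ y) :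
    (swapRotation p q t * diagonal (fun x => (w x : ℂ)) * (swapRotation p q t)ᴴ) x y = 0 := by
  simp [swapRotation_conj_diagonal p q ht, hxy, hswap]

theorem isLocallyDiagonal_swapRotation_conj_diagonal {d1 d2 : ℕ} {p q : Fin d1 × Fin d2}
    (h1 : p.1 ≠ q.1) (h2 : p.2 ≠ q.2) {t : ℝ} (ht : t ∈ Set.Icc 0 1) (w : Fin d1 × Fin d2 → ℝ) :
    IsLocallyDiagonal
      (swapRotation p q t * diagonal (fun x => (w x : ℂ)) * (swapRotation p q t)ᴴ)
      (partialSwap p q t w) where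
  apply_self := swapRotation_conj_diagonal_apply_self p q ht w
  apply_of_fst_eq i s s' h := by
    refine swapRotation_conj_diagonal_apply_of_ne ht w (by simpa using h) ?_
    grind
  apply_of_snd_eq h s := by
    refine swapRotation_conj_diagonal_apply_of_ne ht w (by simpa using h) ?_
    grind

end SwapRotation

section UnitaryOrbit

variable {d1 d2 : ℕ} {C : Matrix (Fin d1 × Fin d2) (Fin d1 × Fin d2) ℂ}

/-- Conjugation by local unitaries makes both partial traces diagonal without changing their
eigenvalues, which can then be read off the diagonal of the whole matrix. -/
theorem exists_doublyStochastic_eigenvalues_eq_marginals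
    {W : Matrix (Fin d1 × Fin d2) (Fin d1 × Fin d2) ℂ} (hW : W ∈ unitaryGroup _ ℂ)
    {v : Fin d1 × Fin d2 → ℝ} (hC : C = W * diagonal (fun p => (v p : ℂ)) * Wᴴ)
    (h1 : (ptrace1 C).IsHermitian) (h2 : (ptrace2 C).IsHermitian) :
    ∃ M ∈ doublyStochastic ℝ (Fin d1 × Fin d2),
      Sum.elim h1.eigenvalues h2.eigenvalues = marginals (M *ᵥ v) := by
  obtain ⟨V₁, hV₁, hdiag₁⟩ := exists_unitary_conj_eq_diagonal h1 1
  obtain ⟨V₂, hV₂, hdiag₂⟩ := exists_unitary_conj_eq_diagonal h2 1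
  rw [← ptrace1_kronecker_conj C (mem_unitaryGroup_iff'.mp hV₂)] at hdiag₁
  rw [← ptrace2_kronecker_conj C V₂ (mem_unitaryGroup_iff'.mp hV₁)] at hdiag₂
  have hconj : (V₂ ⊗ₖ V₁) * C * (V₂ ⊗ₖ V₁)ᴴ =
      ((V₂ ⊗ₖ V₁) * W) * diagonal (fun p => (v p : ℂ)) * ((V₂ ⊗ₖ V₁) * W)ᴴ := by
    simp only [hC, conjTranspose_mul, Matrix.mul_assoc]
  refine ⟨_, normSq_mem_doublyStochastic (mul_mem (kronecker_mem_unitary hV₂ hV₁) hW), ?_⟩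
  ext (s | i)
  · have hentry := congrFun₂ hdiag₁ s s
    simp only [ptrace1, of_apply, hconj, conj_diagonal_apply_self, diagonal_apply_eq] at hentry
    exact_mod_cast hentry.symm
  · have hentry := congrFun₂ hdiag₂ i i
    simp only [ptrace2, of_apply, hconj, conj_diagonal_apply_self, diagonal_apply_eq] at hentry
    exact_mod_cast hentry.symm

theorem exists_majorizedBySeq_eigenvalues_eq_marginals (hC : C.IsHermitian) {L : ℕ → ℝ}
    (hL : Antitone L) {n : ℕ} (e : Fin d1 × Fin d2 ≃ Fin n) (he : ∀ p, hC.eigenvalues p = L (e p))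
    {U : Matrix (Fin d1 × Fin d2) (Fin d1 × Fin d2) ℂ} (hU : U ∈ unitaryGroup _ ℂ)
    (h1 : (ptrace1 (U * C * Uᴴ)).IsHermitian) (h2 : (ptrace2 (U * C * Uᴴ)).IsHermitian) :
    ∃ δ, MajorizedBySeq δ L ∧ Sum.elim h1.eigenvalues h2.eigenvalues = marginals δ := by
  obtain ⟨V, hV, hspec⟩ : ∃ V ∈ unitaryGroup (Fin d1 × Fin d2) ℂ,
      C = V * diagonal (fun p => (L (e p) : ℂ)) * Vᴴ := by
    simp only [← he]
    exact ⟨hC.eigenvectorUnitary, hC.eigenvectorUnitary.2, hC.spectral_theorem⟩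
  have hconj : U * C * Uᴴ = (U * V) * diagonal (fun p => (L (e p) : ℂ)) * (U * V)ᴴ := by
    simp only [conjTranspose_mul, Matrix.mul_assoc, hspec]
  obtain ⟨M, hM, heq⟩ :=
    exists_doublyStochastic_eigenvalues_eq_marginals (mul_mem hU hV) hconj h1 h2
  exact ⟨_, .mulVec hL hM e, heq⟩

/-- Condition (A) of the characterization: the spectra of the partial traces of every matrix in the
unitary orbit of `C` are majorized by those of a diagonal matrix carrying the eigenvalues of `C`. -/
def DiagonalOptimal (hC : C.IsHermitian) : Prop :=
  ∀ U : Matrix (Fin d1 × Fin d2) (Fin d1 × Fin d2) ℂ, U ∈ unitaryGroup (Fin d1 × Fin d2) ℂ →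
    ∃ D : Matrix (Fin d1 × Fin d2) (Fin d1 × Fin d2) ℂ, D.IsDiag ∧
      (∃ σ : Equiv.Perm (Fin d1 × Fin d2), ∀ p, D p p = (hC.eigenvalues (σ p) : ℂ)) ∧
      ∀ (hU1 : (ptrace1 (U * C * Uᴴ)).IsHermitian) (hU2 : (ptrace2 (U * C * Uᴴ)).IsHermitian)
        (hD1 : (ptrace1 D).IsHermitian) (hD2 : (ptrace2 D).IsHermitian),
        Majorizes (Sum.elim hU1.eigenvalues hU2.eigenvalues)
          (Sum.elim hD1.eigenvalues hD2.eigenvalues)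

theorem majorizes_eigenvalues_iff {X Y : Matrix (Fin d1 × Fin d2) (Fin d1 × Fin d2) ℂ}
    {x y : Fin d1 × Fin d2 → ℝ} (hX : IsLocallyDiagonal X x) (hY : IsLocallyDiagonal Y y)
    (hX1 : (ptrace1 X).IsHermitian) (hX2 : (ptrace2 X).IsHermitian)
    (hY1 : (ptrace1 Y).IsHermitian) (hY2 : (ptrace2 Y).IsHermitian) :
    Majorizes (Sum.elim hX1.eigenvalues hX2.eigenvalues)
      (Sum.elim hY1.eigenvalues hY2.eigenvalues) ↔ Majorizes (marginals x) (marginals y) := by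
  obtain ⟨e, he⟩ := hX.exists_eigenvalues_eq_marginals_comp hX1 hX2
  obtain ⟨f, hf⟩ := hY.exists_eigenvalues_eq_marginals_comp hY1 hY2
  rw [he, hf, majorizes_comp_equiv_iff]

theorem diagonalOptimal_of_majorizes (hC : C.IsHermitian)
    (h : ∀ U ∈ unitaryGroup (Fin d1 × Fin d2) ℂ, ∀ (hU1 : (ptrace1 (U * C * Uᴴ)).IsHermitian)
      (hU2 : (ptrace2 (U * C * Uᴴ)).IsHermitian), ∃ σ : Equiv.Perm (Fin d1 × Fin d2),
        Majorizes (Sum.elim hU1.eigenvalues hU2.eigenvalues)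
          (marginals fun p => hC.eigenvalues (σ p))) : DiagonalOptimal hC := by
  intro U hU
  have hX := isHermitian_mul_mul_conjTranspose U hC
  obtain ⟨σ, hσ⟩ := h U hU (isHermitian_ptrace1 hX) (isHermitian_ptrace2 hX)
  refine ⟨diagonal fun p => (hC.eigenvalues (σ p) : ℂ), isDiag_diagonal _,
    ⟨σ, fun p => diagonal_apply_eq _ p⟩, fun hU1 hU2 hD1 hD2 => ?_⟩
  obtain ⟨e, he⟩ := (IsLocallyDiagonal.of_isDiag (isDiag_diagonal _)
    fun p => diagonal_apply_eq _ p).exists_eigenvalues_eq_marginals_comp hD1 hD2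
  rw [he]
  exact (majorizes_comp_equiv_iff (.refl _) e _ _).mpr hσ

theorem diagonalOptimal_of_majorizes_blockArray {d : ℕ}
    {C : Matrix (Fin 2 × Fin d) (Fin 2 × Fin d) ℂ} {hC : C.IsHermitian} {L : ℕ → ℝ}
    (hL : Antitone L) (e : Fin 2 × Fin d ≃ Fin (2 * d)) (he : ∀ p, hC.eigenvalues p = L (e p))
    (h : ∀ δ : Fin 2 × Fin d → ℝ, MajorizedBySeq δ L →
      ∃ m ≤ d, Majorizes (marginals δ) (marginals (blockArray L d m))) :
    DiagonalOptimal hC := by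
  refine diagonalOptimal_of_majorizes hC fun U hU hU1 hU2 => ?_
  obtain ⟨δ, hδ, hmarg⟩ :=
    exists_majorizedBySeq_eigenvalues_eq_marginals hC hL e he hU hU1 hU2
  obtain ⟨m, hm, hmaj⟩ := h δ hδ
  refine ⟨(blockEquiv hm).trans e.symm, ?_⟩
  simp only [hmarg, he, Equiv.trans_apply, e.apply_symm_apply]
  exact hmaj

theorem DiagonalOptimal.swapPathsDominated {d : ℕ}
    {C : Matrix (Fin 2 × Fin d) (Fin 2 × Fin d) ℂ} {hC : C.IsHermitian} (h : DiagonalOptimal hC)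
    {L : ℕ → ℝ} (e : Fin 2 × Fin d ≃ Fin (2 * d)) (he : ∀ p, hC.eigenvalues p = L (e p)) :
    SwapPathsDominated d L := by
  intro f p q h1 h2 t ht
  obtain ⟨V, hV, hdiag⟩ := exists_unitary_conj_eq_diagonal hC (f.trans e.symm)
  obtain ⟨D, hD, ⟨σ, hσ⟩, hmaj⟩ := h _ (mul_mem (swapRotation_mem_unitaryGroup p q ht) hV)
  have hX := isHermitian_mul_mul_conjTranspose (swapRotation p q t * V) hC
  have hlocal : IsLocallyDiagonal
      (swapRotation p q t * V * C * (swapRotation p q t * V)ᴴ)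
      (partialSwap p q t fun p => L (f p)) := by
    convert isLocallyDiagonal_swapRotation_conj_diagonal h1 h2 ht fun p => L (f p) using 1
    simp only [he, Equiv.trans_apply, e.apply_symm_apply] at hdiag
    rw [← hdiag]
    simp only [conjTranspose_mul, Matrix.mul_assoc]
  have hDherm : D.IsHermitian := by
    rw [← hD.diagonal_diag]
    refine isHermitian_diagonal_of_self_adjoint _ (funext fun p => ?_)
    simp [hσ]
  refine ⟨σ.trans e, ?_⟩
  simp only [Equiv.trans_apply, ← he]
  exact ((majorizes_eigenvalues_iff hlocal (.of_isDiag hD hσ) (isHermitian_ptrace1 hX)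
    (isHermitian_ptrace2 hX) (isHermitian_ptrace1 hDherm) (isHermitian_ptrace2 hDherm)).mp
    (hmaj _ _ _ _)).1

theorem diagonalOptimal_iff {d : ℕ} (hd : 2 < d) {C : Matrix (Fin 2 × Fin d) (Fin 2 × Fin d) ℂ}
    {hC : C.IsHermitian} {L : ℕ → ℝ} (h0 : ∀ i, 0 ≤ L i) (hL : Antitone L)
    (e : Fin 2 × Fin d ≃ Fin (2 * d)) (he : ∀ p, hC.eigenvalues p = L (e p)) :
    DiagonalOptimal hC ↔ L 3 = 0 ∨
      (0 < L (2 * d - 2) ∧ ∀ i, 1 ≤ i → i < 2 * d - 1 → L i = L 1) ∨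
      (0 < L (2 * d - 2) ∧ (∀ i, 2 ≤ i → i < 2 * d - 1 → L i = L 2) ∧
        2 * ((d : ℝ) - 2) * L 2 + L (2 * d - 1) ≤ L 1) ∨
      d = 3 ∧ (0 < L 4 ∧ L 5 = 0) ∧ L 2 = L 3 ∧ L 3 = L 4 := by
  refine ⟨fun h => (h.swapPathsDominated e he).cases h0 hL hd,
    fun h => diagonalOptimal_of_majorizes_blockArray hL e he fun δ hδ => ?_⟩
  obtain h | ⟨-, h⟩ | ⟨-, hc, h1⟩ | ⟨hd3, ⟨-, h5⟩, h⟩ := h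
  · exact ⟨0, d.zero_le, majorizes_blockArray_zero_of_cases hd.le h0 hL hδ (.inl h)⟩
  · exact ⟨0, d.zero_le, majorizes_blockArray_zero_of_cases hd.le h0 hL hδ (.inr (.inl h))⟩
  · obtain h | h := majorizes_blockArray_zero_or_one hd.le h0 hL hδ hc h1
    exacts [⟨0, d.zero_le, h⟩, ⟨1, by omega, h⟩]
  · exact ⟨0, d.zero_le,
      majorizes_blockArray_zero_of_cases hd.le h0 hL hδ (.inr (.inr ⟨hd3, h5, h⟩))⟩

end UnitaryOrbit

section Spectrum

/-- The finite sequence `μ` followed by zeros. -/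
def zeroExtend {n : ℕ} (μ : Fin n → ℝ) (i : ℕ) : ℝ :=
  if h : i < n then μ ⟨i, h⟩ else 0

variable {n : ℕ} {μ : Fin n → ℝ}

theorem zeroExtend_of_lt {i : ℕ} (h : i < n) : zeroExtend μ i = μ ⟨i, h⟩ :=
  dif_pos h

theorem zeroExtend_val (μ : Fin n → ℝ) (k : Fin n) : zeroExtend μ k = μ k :=
  zeroExtend_of_lt k.isLt

theorem eq_zeroExtend_symm {ι : Type*} {f : ι → ℝ} (g : Fin n ≃ ι) (hg : ∀ k, μ k = f (g k))
    (i : ι) : f i = zeroExtend μ (g.symm i) := by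
  rw [zeroExtend_val, hg, g.apply_symm_apply]

theorem zeroExtend_nonneg (h : ∀ k, 0 ≤ μ k) (i : ℕ) : 0 ≤ zeroExtend μ i := by
  unfold zeroExtend
  split_ifs
  exacts [h _, le_rfl]

theorem antitone_zeroExtend (h : ∀ k, 0 ≤ μ k) (hμ : Antitone μ) : Antitone (zeroExtend μ) := by
  intro i j hij
  by_cases hj : j < n
  · rw [zeroExtend_of_lt hj, zeroExtend_of_lt (hij.trans_lt hj)]
    exact hμ hij
  · rw [show zeroExtend μ j = 0 from dif_neg hj]
    exact zeroExtend_nonneg h i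

theorem forall_eq_iff_zeroExtend {d a : ℕ} {μ : Fin (2 * d) → ℝ} (ha : a < 2 * d - 1) :
    (∀ i j : Fin (2 * d), a ≤ (i : ℕ) → (i : ℕ) ≤ 2 * d - 2 →
        a ≤ (j : ℕ) → (j : ℕ) ≤ 2 * d - 2 → μ i = μ j) ↔
      ∀ i, a ≤ i → i < 2 * d - 1 → zeroExtend μ i = zeroExtend μ a := by
  refine ⟨fun h i hai hi => ?_, fun h i j hai hi haj hj => ?_⟩
  · rw [zeroExtend_of_lt (by omega), zeroExtend_of_lt (by omega)]
    exact h _ _ hai (by simp only; omega) le_rfl (by simp only; omega)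
  · rw [← zeroExtend_val μ i, ← zeroExtend_val μ j, h i hai (by omega), h j haj (by omega)]

theorem comp_finProdFinEquiv_eq_blockArray {d : ℕ} (μ : Fin (2 * d) → ℝ) :
    (fun p : Fin 2 × Fin d => μ (finProdFinEquiv p)) = blockArray (zeroExtend μ) d 0 := by
  ext ⟨i, s⟩
  rw [← zeroExtend_val μ, blockArray]
  congr 1
  fin_cases i <;> simp [blockIdx, finProdFinEquiv, add_comm]

/-- The two enumerations differ, but only within the constant stretch of `μ`. -/
theorem comp_swap_finProdFinEquiv_eq_blockArray {d : ℕ} (hd : 2 ≤ d) {μ : Fin (2 * d) → ℝ}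
    (hc : ∀ i, 2 ≤ i → i < 2 * d - 1 → zeroExtend μ i = zeroExtend μ 2) :
    (fun p : Fin 2 × Fin d => μ (Equiv.swap (⟨1, by omega⟩ : Fin (2 * d)) ⟨d, by omega⟩
      (finProdFinEquiv p))) = blockArray (zeroExtend μ) d 1 := by
  have hval (i : Fin 2) (s : Fin d) : (finProdFinEquiv (i, s) : ℕ) = s + d * i := rfl
  ext ⟨i, s⟩
  rw [← zeroExtend_val μ, blockArray, Equiv.swap_apply_def]
  simp only [Fin.ext_iff, hval]
  have hcc {j k : ℕ} (hj : 2 ≤ j ∧ j < 2 * d - 1) (hk : 2 ≤ k ∧ k < 2 * d - 1) :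
      zeroExtend μ j = zeroExtend μ k := (hc j hj.1 hj.2).trans (hc k hk.1 hk.2).symm
  have hs := s.isLt
  fin_cases i
  · simp only [blockIdx, Fin.zero_eta, mul_zero, add_zero, cons_val_zero]
    split_ifs
    all_goals first | omega | simp only [hval, Fin.val_zero, mul_zero, add_zero]
    all_goals exact hcc (by omega) (by omega)
  · simp only [blockIdx, Fin.mk_one, mul_one, cons_val_one, cons_val_fin_one]
    split_ifs
    all_goals first | omega | simp only [hval, Fin.val_one]
    all_goals exact congrArg _ (by omega)

end Spectrum

section Rank

variable {ι : Type*} [Fintype ι] [DecidableEq ι] {C : Matrix ι ι ℂ} {L : ℕ → ℝ} {n k : ℕ}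

theorem rank_le_iff_eq_zero (hC : C.PosSemidef) (hL : Antitone L) (e : ι ≃ Fin n)
    (he : ∀ i, hC.1.eigenvalues i = L (e i)) (hk : k < n) : C.rank ≤ k ↔ L k = 0 := by
  have hrank : C.rank = #{j : Fin n | L j ≠ 0} := by
    rw [hC.1.rank_eq_card_non_zero_eigs, ← Fintype.card_subtype]
    exact Fintype.card_congr (e.subtypeEquiv fun i => by rw [he])
  have h0 (j : Fin n) : 0 ≤ L j := by
    simpa [he] using hC.eigenvalues_nonneg (e.symm j)
  have hk0 : 0 ≤ L k := h0 ⟨k, hk⟩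
  rw [hrank]
  refine ⟨fun h => ?_, fun h => ?_⟩
  · by_contra hne
    have hsub : Iic (⟨k, hk⟩ : Fin n) ⊆ ({j : Fin n | L j ≠ 0} : Finset (Fin n)) :=
      fun j hj => mem_filter.mpr
        ⟨mem_univ j, ((hk0.lt_of_ne' hne).trans_le (hL (Fin.le_def.mp (mem_Iic.mp hj)))).ne'⟩
    have hcard := card_le_card hsub
    rw [Fin.card_Iic] at hcard
    exact absurd (hcard.trans h) (by simp)
  · have hsub : ({j : Fin n | L j ≠ 0} : Finset (Fin n)) ⊆ Iio ⟨k, hk⟩ := fun j hj =>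
      mem_Iio.mpr <| not_le.mp fun hkj =>
        (mem_filter.mp hj).2 (((hL hkj).trans_eq h).antisymm (h0 j))
    exact (card_le_card hsub).trans_eq (Fin.card_Iio _)

theorem lt_rank_iff_pos (hC : C.PosSemidef) (hL : Antitone L) (e : ι ≃ Fin n)
    (he : ∀ i, hC.1.eigenvalues i = L (e i)) (hk : k < n) : k < C.rank ↔ 0 < L k := by
  have hk0 : 0 ≤ L k := by simpa [he] using hC.eigenvalues_nonneg (e.symm ⟨k, hk⟩)
  rw [← not_le, rank_le_iff_eq_zero hC hL e he hk, hk0.lt_iff_ne']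

theorem rank_eq_succ_iff (hC : C.PosSemidef) (hL : Antitone L) (e : ι ≃ Fin n)
    (he : ∀ i, hC.1.eigenvalues i = L (e i)) (hk : k + 1 < n) :
    C.rank = k + 1 ↔ 0 < L k ∧ L (k + 1) = 0 := by
  rw [← lt_rank_iff_pos hC hL e he (by omega), ← rank_le_iff_eq_zero hC hL e he hk]
  omega

theorem rank_eq_sub_one_or_eq_iff (hC : C.PosSemidef) (hL : Antitone L) (e : ι ≃ Fin n)
    (he : ∀ i, hC.1.eigenvalues i = L (e i)) (hn : 2 ≤ n) :
    C.rank = n - 1 ∨ C.rank = n ↔ 0 < L (n - 2) := by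
  have hle : C.rank ≤ n := by simpa [Fintype.card_congr e] using C.rank_le_card_width
  rw [← lt_rank_iff_pos hC hL e he (by omega)]
  omega

end Rank

theorem qubit_qudit_characterization (d : ℕ) (hd : 2 < d)
    (C : Matrix (Fin 2 × Fin d) (Fin 2 × Fin d) ℂ) (hC : C.PosSemidef)
    (htr1 : (ptrace1 C).IsHermitian) (htr2 : (ptrace2 C).IsHermitian)
    -- `μ` lists the eigenvalues of `C` in decreasing order
    (μ : Fin (2 * d) → ℝ) (hμ : Antitone μ)
    (g : Fin (2 * d) ≃ Fin 2 × Fin d) (hg : ∀ k, μ k = hC.1.eigenvalues (g k)) :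
    -- (A) ↔ (B)
    ((∀ U : Matrix (Fin 2 × Fin d) (Fin 2 × Fin d) ℂ,
        U ∈ Matrix.unitaryGroup (Fin 2 × Fin d) ℂ →
        ∃ D : Matrix (Fin 2 × Fin d) (Fin 2 × Fin d) ℂ, D.IsDiag ∧
          (∃ gp : Equiv.Perm (Fin 2 × Fin d), ∀ p, D p p = (hC.1.eigenvalues (gp p) : ℂ)) ∧
          ∀ (hU1 : (ptrace1 (U * C * Uᴴ)).IsHermitian)
            (hU2 : (ptrace2 (U * C * Uᴴ)).IsHermitian)
            (hD1 : (ptrace1 D).IsHermitian) (hD2 : (ptrace2 D).IsHermitian),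
            Majorizes (Sum.elim hU1.eigenvalues hU2.eigenvalues)
              (Sum.elim hD1.eigenvalues hD2.eigenvalues)) ↔
      (C.rank ≤ 3 ∨
        ((C.rank = 2 * d - 1 ∨ C.rank = 2 * d) ∧
          (∀ i j : Fin (2 * d), 1 ≤ (i : ℕ) → (i : ℕ) ≤ 2 * d - 2 →
            1 ≤ (j : ℕ) → (j : ℕ) ≤ 2 * d - 2 → μ i = μ j)) ∨
        ((C.rank = 2 * d - 1 ∨ C.rank = 2 * d) ∧
          (∀ i j : Fin (2 * d), 2 ≤ (i : ℕ) → (i : ℕ) ≤ 2 * d - 2 →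
            2 ≤ (j : ℕ) → (j : ℕ) ≤ 2 * d - 2 → μ i = μ j) ∧
          2 * ((d : ℝ) - 2) * μ ⟨2, by omega⟩ + μ ⟨2 * d - 1, by omega⟩ ≤ μ ⟨1, by omega⟩) ∨
        (d = 3 ∧ C.rank = 5 ∧
          μ ⟨2, by omega⟩ = μ ⟨3, by omega⟩ ∧ μ ⟨3, by omega⟩ = μ ⟨4, by omega⟩))) ∧
    -- moreover, in cases (1), (2), (4) `D` can be taken to be `Λ`
    ((C.rank ≤ 3 ∨
        ((C.rank = 2 * d - 1 ∨ C.rank = 2 * d) ∧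
          (∀ i j : Fin (2 * d), 1 ≤ (i : ℕ) → (i : ℕ) ≤ 2 * d - 2 →
            1 ≤ (j : ℕ) → (j : ℕ) ≤ 2 * d - 2 → μ i = μ j)) ∨
        (d = 3 ∧ C.rank = 5 ∧
          μ ⟨2, by omega⟩ = μ ⟨3, by omega⟩ ∧ μ ⟨3, by omega⟩ = μ ⟨4, by omega⟩)) →
      ∀ U : Matrix (Fin 2 × Fin d) (Fin 2 × Fin d) ℂ,
        U ∈ Matrix.unitaryGroup (Fin 2 × Fin d) ℂ →
        ∀ (hU1 : (ptrace1 (U * C * Uᴴ)).IsHermitian)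
          (hU2 : (ptrace2 (U * C * Uᴴ)).IsHermitian),
          Majorizes (Sum.elim hU1.eigenvalues hU2.eigenvalues)
            (Sum.elim (fun s : Fin d => ∑ i : Fin 2, μ (finProdFinEquiv (i, s)))
                      (fun j : Fin 2 => ∑ s : Fin d, μ (finProdFinEquiv (j, s))))) ∧
    -- and in case (3) `D` can be taken to be `Λ` or `Λ` with entries 2 and d+1 swapped
    (((C.rank = 2 * d - 1 ∨ C.rank = 2 * d) ∧
        (∀ i j : Fin (2 * d), 2 ≤ (i : ℕ) → (i : ℕ) ≤ 2 * d - 2 →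
          2 ≤ (j : ℕ) → (j : ℕ) ≤ 2 * d - 2 → μ i = μ j) ∧
        2 * ((d : ℝ) - 2) * μ ⟨2, by omega⟩ + μ ⟨2 * d - 1, by omega⟩ ≤ μ ⟨1, by omega⟩) →
      ∀ U : Matrix (Fin 2 × Fin d) (Fin 2 × Fin d) ℂ,
        U ∈ Matrix.unitaryGroup (Fin 2 × Fin d) ℂ →
        ∀ (hU1 : (ptrace1 (U * C * Uᴴ)).IsHermitian)
          (hU2 : (ptrace2 (U * C * Uᴴ)).IsHermitian),
          Majorizes (Sum.elim hU1.eigenvalues hU2.eigenvalues)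
            (Sum.elim (fun s : Fin d => ∑ i : Fin 2, μ (finProdFinEquiv (i, s)))
                      (fun j : Fin 2 => ∑ s : Fin d, μ (finProdFinEquiv (j, s)))) ∨
          Majorizes (Sum.elim hU1.eigenvalues hU2.eigenvalues)
            (Sum.elim
              (fun s : Fin d => ∑ i : Fin 2,
                μ (Equiv.swap (⟨1, by omega⟩ : Fin (2 * d)) ⟨d, by omega⟩ (finProdFinEquiv (i, s))))
              (fun j : Fin 2 => ∑ s : Fin d,
                μ (Equiv.swap (⟨1, by omega⟩ : Fin (2 * d)) ⟨d, by omega⟩ (finProdFinEquiv (j, s)))))) := by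
  have hμ0 (k) : 0 ≤ μ k := (hg k).symm ▸ hC.eigenvalues_nonneg _
  have h0 := zeroExtend_nonneg hμ0
  have hL := antitone_zeroExtend hμ0 hμ
  have he := eq_zeroExtend_symm g hg
  have hμL (k) (hk : k < 2 * d) : μ ⟨k, hk⟩ = zeroExtend μ k := (zeroExtend_of_lt hk).symm
  rw [rank_eq_sub_one_or_eq_iff hC hL g.symm he (by omega),
    rank_le_iff_eq_zero hC hL g.symm he (by omega : 3 < 2 * d),
    forall_eq_iff_zeroExtend (by omega : 1 < 2 * d - 1),
    forall_eq_iff_zeroExtend (by omega : 2 < 2 * d - 1),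
    show C.rank = 5 ↔ _ from rank_eq_succ_iff hC hL g.symm he (by omega : 4 + 1 < 2 * d),
    hμL 1, hμL 2, hμL 3, hμL 4, hμL (2 * d - 1)]
  refine ⟨diagonalOptimal_iff hd h0 hL g.symm he, fun hB U hU hU1 hU2 => ?_,
    fun ⟨_, hc, h1⟩ U hU hU1 hU2 => ?_⟩
  all_goals
    obtain ⟨δ, hδ, hmarg⟩ :=
      exists_majorizedBySeq_eigenvalues_eq_marginals hC.1 hL g.symm he hU hU1 hU2
    rw [hmarg]
  · change Majorizes _ (marginals fun p => μ (finProdFinEquiv p))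
    rw [comp_finProdFinEquiv_eq_blockArray]
    exact majorizes_blockArray_zero_of_cases hd.le h0 hL hδ <|
      hB.imp_right (Or.imp And.right fun ⟨h3, ⟨_, h5⟩, h⟩ => ⟨h3, h5, h⟩)
  · have h := majorizes_blockArray_zero_or_one hd.le h0 hL hδ hc h1
    rwa [← comp_finProdFinEquiv_eq_blockArray,
      ← comp_swap_finProdFinEquiv_eq_blockArray hd.le hc] at h
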